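/- Under Assumptions A1 and A2, for every integer q ≥ 1, every function g ∈ L_{V^{1/(2q)}} and every n ≥ 1, the stationary chain satisfies the Rosenthal-type inequality E_π[|S_n|^{2q}] ≤ μ_q·(Var_π(S_n))^q + C_0^{2q}·‖ḡ‖_{V^{1/(2q)}}^{2q}·Σ_{u=1}^{q−1} B_0(u,q)·n^u / (ρ^{u/2}·(log(1/ρ))^{2q−u}), where C_0 = 2cπ(V). -/

import Mathlib

open MeasureTheory ProbabilityTheory Finset
open scoped ENNReal Classical

noncomputable section

/-- `n`-th iterate of a Markov kernel. -/
def kIter {Y : Type*} [MeasurableSpace Y] (Q : ProbabilityTheory.Kernel Y Y) :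
    ℕ → ProbabilityTheory.Kernel Y Y
  | 0 => ProbabilityTheory.Kernel.id
  | n + 1 => (kIter Q n).comp Q

/-- `U`-weighted total variation distance between two finite measures:
`∫ U d|μ - ν|`, via the Jordan decomposition of `μ - ν`. -/
def wTV {Y : Type*} [MeasurableSpace Y] (U : Y → ℝ) (μ ν : Measure Y) : ℝ :=
  (∫ x, U x ∂(μ - ν)) + ∫ x, U x ∂(ν - μ)

/-- `U`-weighted sup norm `‖g‖_U = sup_x |g x| / U x`. -/
def vnorm {Y : Type*} (U : Y → ℝ) (g : Y → ℝ) : ℝ := ⨆ x, |g x| / U x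

/-- Membership in the class `L_U`: measurable with finite `U`-weighted sup norm. -/
structure MemL {Y : Type*} [MeasurableSpace Y] (U : Y → ℝ) (g : Y → ℝ) : Prop where
  meas : Measurable g
  bdd : BddAbove (Set.range fun x => |g x| / U x)

/-- `(Xs n)` is a Markov chain with initial distribution `ξ` and Markov kernel `Q`:
the law of `Xs 0` is `ξ` and, conditionally on the past up to time `n`, the
distribution of `Xs (n+1)` is `Q (Xs n)`. -/
structure IsMarkovChain {X : Type*} [MeasurableSpace X] {Ω : Type*} [MeasurableSpace Ω]
    (P : Measure Ω) (Xs : ℕ → Ω → X) (ξ : Measure X)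
    (Q : ProbabilityTheory.Kernel X X) : Prop where
  meas : ∀ n, Measurable (Xs n)
  init : P.map (Xs 0) = ξ
  markov : ∀ (n : ℕ) (f : X → ℝ), Measurable f → (∀ x, |f x| ≤ 1) →
    (P[fun ω => f (Xs (n + 1) ω) |
        ⨆ i ∈ Finset.range (n + 1), MeasurableSpace.comap (Xs i) inferInstance])
      =ᵐ[P] fun ω => ∫ y, f y ∂(Q (Xs n ω))

/-- The combinatorial coefficient `B_γ(u,q)`. -/
def Bcoef (γ : ℝ) (u q : ℕ) : ℝ :=
  ((2 * q).factorial : ℝ) / (u.factorial : ℝ) *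
    ∑ k ∈ Finset.univ.filter
        (fun k : Fin u → Fin (2 * q + 1) =>
          (∀ i, 2 ≤ (k i : ℕ)) ∧ ∑ i, (k i : ℕ) = 2 * q),
      ∏ i, ((k i : ℕ).factorial : ℝ) ^ (γ + 2)

/-- The `2q`-th moment `(2q)!/(q! 2^q)` of the standard Gaussian. -/
def gaussMoment (q : ℕ) : ℝ := ((2 * q).factorial : ℝ) / ((q.factorial : ℝ) * 2 ^ q)

/-! ### Part 1: convolution of functions on multisets -/

def cnv (f g : Multiset ℕ → ℝ) (s : Multiset ℕ) : ℝ :=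
  (s.antidiagonal.map fun p => f p.1 * g p.2).sum

def shf (a : ℕ) (f : Multiset ℕ → ℝ) : Multiset ℕ → ℝ := fun s => f (a ::ₘ s)

def dlt : Multiset ℕ → ℝ := fun s => if s = 0 then 1 else 0

theorem cnv_zero (f g : Multiset ℕ → ℝ) : cnv f g 0 = f 0 * g 0 := by
  simp [cnv]

theorem cnv_cons (f g : Multiset ℕ → ℝ) (a : ℕ) (s : Multiset ℕ) :
    cnv f g (a ::ₘ s) = cnv f (shf a g) s + cnv (shf a f) g s := by
  simp [cnv, shf, Multiset.antidiagonal_cons, Multiset.map_map]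

theorem shf_cnv (f g : Multiset ℕ → ℝ) (a : ℕ) :
    shf a (cnv f g) = fun s => cnv f (shf a g) s + cnv (shf a f) g s := by
  funext s; exact cnv_cons f g a s

theorem cnv_congr {f f' g g' : Multiset ℕ → ℝ} {s : Multiset ℕ}
    (hf : ∀ t ≤ s, f t = f' t) (hg : ∀ t ≤ s, g t = g' t) : cnv f g s = cnv f' g' s := by
  unfold cnv
  congr 1
  apply Multiset.map_congr rfl
  intro p hp
  rw [Multiset.mem_antidiagonal] at hp
  rw [hf p.1 (by rw [← hp]; exact Multiset.le_add_right _ _),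
    hg p.2 (by rw [← hp]; exact Multiset.le_add_left _ _)]

theorem cnv_comm (f g : Multiset ℕ → ℝ) : cnv f g = cnv g f := by
  funext s
  induction s using Multiset.induction_on generalizing f g with
  | empty => simp [cnv_zero, mul_comm]
  | cons a s ih => rw [cnv_cons, cnv_cons, ih, ih (shf a f)]; ring

theorem cnv_add_right (f g h : Multiset ℕ → ℝ) (s : Multiset ℕ) :
    cnv f (fun t => g t + h t) s = cnv f g s + cnv f h s := by
  simp [cnv, mul_add, Multiset.sum_map_add]

theorem cnv_add_left (f g h : Multiset ℕ → ℝ) (s : Multiset ℕ) :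
    cnv (fun t => g t + h t) f s = cnv g f s + cnv h f s := by
  simp [cnv, add_mul, Multiset.sum_map_add]

theorem cnv_smul_left (r : ℝ) (f g : Multiset ℕ → ℝ) (s : Multiset ℕ) :
    cnv (fun t => r * f t) g s = r * cnv f g s := by
  simp [cnv, mul_assoc, Multiset.sum_map_mul_left]

theorem cnv_assoc (f g h : Multiset ℕ → ℝ) : cnv (cnv f g) h = cnv f (cnv g h) := by
  funext s
  induction s using Multiset.induction_on generalizing f g h with
  | empty => simp [cnv_zero, mul_assoc]
  | cons a s ih =>
    rw [cnv_cons, cnv_cons, shf_cnv, shf_cnv, cnv_add_left, cnv_add_right, ih, ih, ih]; ring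

theorem cnv_dlt (f : Multiset ℕ → ℝ) : cnv f dlt = f := by
  funext s
  induction s using Multiset.induction_on generalizing f with
  | empty => simp [cnv_zero, dlt]
  | cons a s ih =>
    rw [cnv_cons, ih]
    have : shf a dlt = fun _ => 0 := by funext t; simp [shf, dlt]
    rw [this]; simp [cnv, shf]

def tl (m : Multiset ℕ → ℝ) : Multiset ℕ → ℝ := fun s => if s = 0 then 0 else m s

def invN (m : Multiset ℕ → ℝ) : ℕ → Multiset ℕ → ℝ
  | 0 => dlt
  | N + 1 => fun s => dlt s - cnv (tl m) (invN m N) s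

def inv' (m : Multiset ℕ → ℝ) : Multiset ℕ → ℝ := fun s => invN m (Multiset.card s) s

theorem cnv_tl_congr {m g g' : Multiset ℕ → ℝ} {s : Multiset ℕ}
    (hg : ∀ t, Multiset.card t < Multiset.card s → g t = g' t) :
    cnv (tl m) g s = cnv (tl m) g' s := by
  unfold cnv
  congr 1
  apply Multiset.map_congr rfl
  intro p hp
  rw [Multiset.mem_antidiagonal] at hp
  by_cases h0 : p.1 = 0
  · simp [tl, h0]
  · rw [hg p.2]
    rw [← hp, Multiset.card_add]
    have := Multiset.card_pos.2 h0
    omega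

theorem invN_succ (m : Multiset ℕ → ℝ) (N : ℕ) (s : Multiset ℕ) (hs : Multiset.card s ≤ N) :
    invN m (N + 1) s = invN m N s := by
  induction N generalizing s with
  | zero =>
    have : s = 0 := by simpa using hs
    subst this
    simp [invN, cnv_zero, tl]
  | succ N ih =>
    change dlt s - cnv (tl m) (invN m (N+1)) s = dlt s - cnv (tl m) (invN m N) s
    rw [cnv_tl_congr (fun t ht => ih t (by omega))]

theorem invN_eq (m : Multiset ℕ → ℝ) (N : ℕ) (s : Multiset ℕ) (hs : Multiset.card s ≤ N) :
    invN m N s = inv' m s := by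
  induction N, hs using Nat.le_induction with
  | base => rfl
  | succ N hN ih => rw [invN_succ m N s hN, ih]

theorem cnv_inv (m : Multiset ℕ → ℝ) (h0 : m 0 = 1) : cnv m (inv' m) = dlt := by
  funext s
  have hm : m = fun t => dlt t + tl m t := by
    funext t; by_cases h : t = 0 <;> simp [dlt, tl, h, h0]
  have h1 : inv' m s = dlt s - cnv (tl m) (inv' m) s := by
    rw [← invN_eq m (Multiset.card s + 1) s (by omega)]
    change dlt s - cnv (tl m) (invN m _) s = _
    rw [cnv_tl_congr (g' := inv' m) (fun t ht => invN_eq m _ t ht.le)]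
  conv_lhs => rw [hm, cnv_add_left, ← hm, cnv_comm, cnv_dlt, h1]
  ring

theorem inv'_zero (m : Multiset ℕ → ℝ) : inv' m 0 = 1 := by
  simp [inv', invN, dlt]

/-- derivative of the inverse -/
theorem shf_inv (m : Multiset ℕ → ℝ) (h0 : m 0 = 1) (a : ℕ) :
    shf a (inv' m) = fun s => - cnv (cnv (shf a m) (inv' m)) (inv' m) s := by
  have h1 : (fun s => cnv m (shf a (inv' m)) s + cnv (shf a m) (inv' m) s) = fun _ => 0 := by
    rw [← shf_cnv, cnv_inv m h0]; funext t; simp [shf, dlt]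
  have h2 : cnv m (shf a (inv' m)) = fun s => (-1) * cnv (shf a m) (inv' m) s := by
    funext s; have := congrFun h1 s; linarith
  have h3 : shf a (inv' m) = cnv (cnv m (shf a (inv' m))) (inv' m) := by
    rw [cnv_comm m, cnv_assoc, cnv_inv m h0, cnv_dlt]
  rw [h3, h2]; funext s; rw [cnv_smul_left]; ring

/-- logarithmic derivative -/
theorem log_symm (m : Multiset ℕ → ℝ) (h0 : m 0 = 1) (a b : ℕ) (s : Multiset ℕ) :
    cnv (shf a m) (inv' m) (b ::ₘ s) = cnv (shf b m) (inv' m) (a ::ₘ s) := by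
  rw [cnv_cons, cnv_cons, shf_inv m h0, shf_inv m h0]
  have e : shf b (shf a m) = shf a (shf b m) := by
    funext t; unfold shf; rw [Multiset.cons_swap]
  rw [e]
  have : ∀ a b, cnv (shf a m) (fun s => -cnv (cnv (shf b m) (inv' m)) (inv' m) s) s =
    - cnv (cnv (shf a m) (shf b m)) (cnv (inv' m) (inv' m)) s := by
    intro a b
    rw [cnv_comm, show (fun s => -cnv (cnv (shf b m) (inv' m)) (inv' m) s) =
      fun s => (-1) * cnv (cnv (shf b m) (inv' m)) (inv' m) s by funext; ring, cnv_smul_left,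
      cnv_comm, cnv_assoc (shf b m), ← cnv_assoc (shf a m)]
    ring
  rw [this, this, cnv_comm (shf a m) (shf b m)]

def cml (m : Multiset ℕ → ℝ) (s : Multiset ℕ) : ℝ :=
  if h : ∃ a, a ∈ s then cnv (shf h.choose m) (inv' m) (s.erase h.choose) else 0

theorem cml_cons (m : Multiset ℕ → ℝ) (h0 : m 0 = 1) (a : ℕ) (s : Multiset ℕ) :
    cml m (a ::ₘ s) = cnv (shf a m) (inv' m) s := by
  have h : ∃ b, b ∈ a ::ₘ s := ⟨a, Multiset.mem_cons_self _ _⟩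
  rw [cml, dif_pos h]
  have hb := h.choose_spec
  generalize h.choose = b at hb
  by_cases hab : b = a
  · subst hab; simp
  · have hbs : b ∈ s := by simpa [hab] using hb
    obtain ⟨r, rfl⟩ := Multiset.exists_cons_of_mem hbs
    rw [Multiset.cons_swap, Multiset.erase_cons_head, log_symm m h0]

theorem shf_eq_cnv (m : Multiset ℕ → ℝ) (h0 : m 0 = 1) (a : ℕ) :
    shf a m = cnv (shf a (cml m)) m := by
  have : shf a (cml m) = cnv (shf a m) (inv' m) := by
    funext s; exact cml_cons m h0 a s
  rw [this, cnv_assoc, cnv_comm (inv' m), cnv_inv m h0, cnv_dlt]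

theorem cnv_card (F G : ℕ → ℝ) (s : Multiset ℕ) :
    cnv (fun t => F (Multiset.card t)) (fun t => G (Multiset.card t)) s =
      ∑ p ∈ Finset.HasAntidiagonal.antidiagonal (Multiset.card s),
        ((Multiset.card s).choose p.1 : ℝ) * (F p.1 * G p.2) := by
  induction s using Multiset.induction_on generalizing F G with
  | empty => simp [cnv_zero]
  | cons a s ih =>
    rw [cnv_cons]
    have h1 : ∀ F : ℕ → ℝ, shf a (fun t => F (Multiset.card t)) =
      fun t => (fun i => F (i+1)) (Multiset.card t) := by
      intro F; funext t; simp [shf]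
    rw [h1, h1, ih F (fun i => G (i+1)), ih (fun i => F (i+1)), Multiset.card_cons,
      Finset.sum_antidiagonal_choose_succ_mul (fun i j => F i * G j)]
    congr 1
    refine Finset.sum_congr rfl fun p hp => ?_
    rw [Finset.HasAntidiagonal.mem_antidiagonal] at hp
    rw [Nat.choose_symm_of_eq_add hp.symm]

theorem cnv_fact (s : Multiset ℕ) :
    cnv (fun t => if Multiset.card t = 0 then 0 else ((Multiset.card t).factorial : ℝ))
      (fun t => ((Multiset.card t).factorial : ℝ)) s =
      (Multiset.card s : ℝ) * (Multiset.card s).factorial := by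
  rw [cnv_card (fun i => if i = 0 then 0 else (i.factorial : ℝ)) (fun i => (i.factorial : ℝ))]
  rw [Finset.Nat.sum_antidiagonal_eq_sum_range_succ_mk, Finset.sum_range_succ']
  simp only [if_true, zero_mul, mul_zero, add_zero]
  rw [Finset.sum_congr rfl (g := fun _ => ((Multiset.card s).factorial : ℝ))]
  · simp
  · intro i hi
    rw [Finset.mem_range] at hi
    have := Nat.choose_mul_factorial_mul_factorial (n := Multiset.card s) (k := i+1) (by omega)
    simp only [Nat.succ_ne_zero, if_false]
    rw [← this]; push_cast; ring

/-! ### Part 2: sums over tuples -/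

def Tsum (N : ℕ) : ℕ → (Multiset ℕ → ℝ) → ℝ
  | 0, f => f 0
  | k + 1, f => ∑ a ∈ Finset.range N, Tsum N k (shf a f)

theorem Tsum_succ (N k : ℕ) (f : Multiset ℕ → ℝ) :
    Tsum N (k + 1) f = ∑ a ∈ Finset.range N, Tsum N k (shf a f) := rfl

theorem Tsum_add (N k : ℕ) (f g : Multiset ℕ → ℝ) :
    Tsum N k (fun s => f s + g s) = Tsum N k f + Tsum N k g := by
  induction k generalizing f g with
  | zero => rfl
  | succ k ih =>
    simp only [Tsum_succ, ← Finset.sum_add_distrib]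
    exact Finset.sum_congr rfl fun a _ => ih (shf a f) (shf a g)

theorem Tsum_smul (N k : ℕ) (r : ℝ) (f : Multiset ℕ → ℝ) :
    Tsum N k (fun s => r * f s) = r * Tsum N k f := by
  induction k generalizing f with
  | zero => rfl
  | succ k ih =>
    simp only [Tsum_succ, Finset.mul_sum]
    exact Finset.sum_congr rfl fun a _ => ih (shf a f)

theorem Tsum_cnv (N k : ℕ) (f g : Multiset ℕ → ℝ) :
    Tsum N k (cnv f g) = ∑ p ∈ Finset.HasAntidiagonal.antidiagonal k,
      (k.choose p.1 : ℝ) * (Tsum N p.1 f * Tsum N p.2 g) := by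
  induction k generalizing f g with
  | zero => simp [Tsum, cnv_zero]
  | succ k ih =>
    rw [Finset.sum_antidiagonal_choose_succ_mul (fun i j => Tsum N i f * Tsum N j g), Tsum_succ]
    have h1 : ∀ a, Tsum N k (shf a (cnv f g)) =
        Tsum N k (cnv f (shf a g)) + Tsum N k (cnv (shf a f) g) := by
      intro a; rw [shf_cnv, Tsum_add]
    simp only [h1, ih, Finset.sum_add_distrib]
    congr 1
    · rw [Finset.sum_comm]
      refine Finset.sum_congr rfl fun p _ => ?_
      rw [Tsum_succ]; simp only [Finset.mul_sum]
    · rw [Finset.sum_comm]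
      refine Finset.sum_congr rfl fun p hp => ?_
      rw [Finset.HasAntidiagonal.mem_antidiagonal] at hp
      rw [Tsum_succ, Nat.choose_symm_of_eq_add hp.symm]; simp only [Finset.mul_sum, Finset.sum_mul]

theorem Tsum_prod (N k : ℕ) (y : ℕ → ℝ) (r : ℝ) :
    Tsum N k (fun s => r * (s.map y).prod) = r * (∑ i ∈ Finset.range N, y i) ^ k := by
  induction k generalizing r with
  | zero => simp [Tsum]
  | succ k ih =>
    rw [Tsum_succ]
    have : ∀ a, shf a (fun s => r * (s.map y).prod) = fun s => (r * y a) * (s.map y).prod := by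
      intro a; funext s; simp [shf, mul_assoc]
    simp only [this, ih]
    rw [← Finset.sum_mul, ← Finset.mul_sum, pow_succ]; ring

theorem Tsum_mono (N k : ℕ) (f g : Multiset ℕ → ℝ)
    (h : ∀ s, Multiset.card s = k → f s ≤ g s) : Tsum N k f ≤ Tsum N k g := by
  induction k generalizing f g with
  | zero => exact h 0 (by simp)
  | succ k ih =>
    exact Finset.sum_le_sum fun a _ => ih _ _ fun s hs => h _ (by simp [hs])

theorem Tsum_congr (N k : ℕ) (f g : Multiset ℕ → ℝ)
    (h : ∀ s, Multiset.card s = k → f s = g s) : Tsum N k f = Tsum N k g :=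
  le_antisymm (Tsum_mono _ _ _ _ fun s hs => (h s hs).le)
    (Tsum_mono _ _ _ _ fun s hs => (h s hs).ge)

theorem abs_Tsum_le (N k : ℕ) (f : Multiset ℕ → ℝ) :
    |Tsum N k f| ≤ Tsum N k (fun s => |f s|) := by
  induction k generalizing f with
  | zero => exact le_rfl
  | succ k ih =>
    exact (Finset.abs_sum_le_sum_abs _ _).trans (Finset.sum_le_sum fun a _ => ih _)

def Usum (φ : ℕ → Multiset ℕ → ℝ) (s : Multiset ℕ) : ℝ :=
  (s.map fun a => φ a (s.erase a)).sum

theorem Usum_cons (φ : ℕ → Multiset ℕ → ℝ) (b : ℕ) (s : Multiset ℕ) :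
    Usum φ (b ::ₘ s) = φ b s + Usum (fun a => shf b (φ a)) s := by
  simp only [Usum, Multiset.map_cons, Multiset.sum_cons, Multiset.erase_cons_head]
  congr 2
  apply Multiset.map_congr rfl
  intro a ha
  rw [Multiset.erase_cons_tail_of_mem ha]; rfl

theorem Tsum_Usum (N k : ℕ) (φ : ℕ → Multiset ℕ → ℝ) :
    Tsum N (k + 1) (Usum φ) = (k + 1) * ∑ a ∈ Finset.range N, Tsum N k (φ a) := by
  induction k generalizing φ with
  | zero => simp [Tsum, shf, Usum]
  | succ k ih =>
    rw [Tsum_succ]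
    have h1 : ∀ b, shf b (Usum φ) = fun s => φ b s + Usum (fun a => shf b (φ a)) s := by
      intro b; funext s; exact Usum_cons φ b s
    simp only [h1, Tsum_add, ih, Finset.sum_add_distrib, ← Finset.mul_sum]
    rw [Finset.sum_comm]
    simp only [Tsum_succ]
    push_cast; ring

theorem Tsum_restrict (N k a : ℕ) (f : Multiset ℕ → ℝ) (hf : ∀ s, 0 ≤ f s) :
    Tsum N k (fun s => if ∀ b ∈ s, b ≤ a then f s else 0) ≤ Tsum (a + 1) k f := by
  induction k generalizing f with
  | zero => simp [Tsum]
  | succ k ih =>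
    rw [Tsum_succ, Tsum_succ]
    have hnn : ∀ M k (f : Multiset ℕ → ℝ), (∀ s, 0 ≤ f s) → 0 ≤ Tsum M k f := by
      intro M k
      induction k with
      | zero => intro f hf; exact hf 0
      | succ k ih => intro f hf; exact Finset.sum_nonneg fun a _ => ih _ fun s => hf _
    have h1 : ∀ b ∈ Finset.range N,
        Tsum N k (shf b (fun s => if ∀ b ∈ s, b ≤ a then f s else 0)) ≤
        if b ∈ Finset.range (a+1) then Tsum (a+1) k (shf b f) else 0 := by
      intro b _
      by_cases hb : b ≤ a
      · rw [if_pos (by simp; omega)]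
        refine le_trans (le_of_eq ?_) (ih (shf b f) fun s => hf _)
        congr 1; funext s; simp [shf, hb]
      · rw [if_neg (by simp; omega)]
        refine le_of_eq ?_
        have : shf b (fun s => if ∀ b ∈ s, b ≤ a then f s else 0) = fun s => 0 * f s := by
          funext s; simp [shf, hb]
        rw [this, Tsum_smul, zero_mul]
    refine (Finset.sum_le_sum h1).trans ?_
    rw [← Finset.sum_filter]
    apply Finset.sum_le_sum_of_subset_of_nonneg
    · intro b hb; exact (Finset.mem_filter.1 hb).2
    · intro b _ _; exact hnn _ _ _ fun s => hf _

theorem Tsum_max (N k : ℕ) (f : Multiset ℕ → ℝ) (hf : ∀ s, 0 ≤ f s) :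
    Tsum N (k + 1) f ≤ (k + 1) * ∑ a ∈ Finset.range N, Tsum (a + 1) k (shf a f) := by
  have h1 : Tsum N (k+1) f ≤
      Tsum N (k+1) (Usum fun a s => if ∀ b ∈ s, b ≤ a then shf a f s else 0) := by
    apply Tsum_mono
    intro s hs
    have hne : s.toFinset.Nonempty := by
      obtain ⟨x, hx⟩ := Multiset.card_pos_iff_exists_mem.1 (show 0 < Multiset.card s by omega)
      exact ⟨x, by simpa using hx⟩
    have hmem : s.toFinset.max' hne ∈ s := by simpa using s.toFinset.max'_mem hne
    have hmax : ∀ b ∈ s, b ≤ s.toFinset.max' hne := fun b hb =>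
      Finset.le_max' _ _ (by simpa using hb)
    generalize s.toFinset.max' hne = M at hmem hmax
    have : f s = (fun a => if ∀ b ∈ s.erase a, b ≤ a then shf a f (s.erase a) else 0) M := by
      simp only [shf]
      rw [if_pos (fun b hb => hmax b (Multiset.mem_of_mem_erase hb)), Multiset.cons_erase hmem]
    rw [this]
    unfold Usum
    apply Multiset.single_le_sum
    · intro x hx
      rw [Multiset.mem_map] at hx
      obtain ⟨a, _, rfl⟩ := hx
      beta_reduce
      split_ifs
      · exact hf _
      · exact le_rfl
    · exact Multiset.mem_map_of_mem _ hmem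
  refine h1.trans ?_
  rw [Tsum_Usum]
  apply mul_le_mul_of_nonneg_left _ (by positivity)
  exact Finset.sum_le_sum fun a _ => Tsum_restrict N k a (shf a f) fun s => hf _

/-- span of `s` below `a` -/
def spn (a : ℕ) (s : Multiset ℕ) : ℕ := (s.map fun i => a - i).sup

theorem spn_cons (a b : ℕ) (s : Multiset ℕ) (hb : b ≤ a) (hs : ∀ i ∈ s, i ≤ b) :
    spn a (b ::ₘ s) = (a - b) + spn b s := by
  apply le_antisymm
  · unfold spn
    rw [Multiset.sup_le]
    intro x hx
    simp only [Multiset.map_cons, Multiset.mem_cons, Multiset.mem_map] at hx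
    rcases hx with rfl | ⟨i, hi, rfl⟩
    · omega
    · have := Multiset.le_sup (Multiset.mem_map_of_mem (fun i => b - i) hi)
      omega
  · have h1 : a - b ≤ spn a (b ::ₘ s) := by
      unfold spn; rw [Multiset.map_cons, Multiset.sup_cons]; exact le_sup_left
    have h2 : spn b s ≤ spn a (b ::ₘ s) - (a - b) := by
      conv_lhs => unfold spn
      rw [Multiset.sup_le]
      intro x hx
      obtain ⟨i, hi, rfl⟩ := Multiset.mem_map.1 hx
      have := Multiset.le_sup (Multiset.mem_map_of_mem (fun i => a - i)
        (Multiset.mem_cons_of_mem (b := b) hi))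
      have h3 := hs i hi
      change a - i ≤ spn a _ at this
      omega
    omega

theorem spn_add (a : ℕ) (s t : Multiset ℕ) : spn a (s + t) ≤ spn a s + spn a t := by
  unfold spn
  rw [Multiset.map_add, Multiset.sup_add]
  exact sup_le (Nat.le_add_right _ _) (Nat.le_add_left _ _)

theorem Tsum_geom (θ : ℝ) (h0 : 0 ≤ θ) (h1 : θ < 1) (k a : ℕ) (C : ℝ) (hC : 0 ≤ C)
    (f : Multiset ℕ → ℝ) (hf0 : ∀ s, 0 ≤ f s)
    (hf : ∀ s, Multiset.card s = k → (∀ i ∈ s, i ≤ a) → f s ≤ C * θ ^ spn a s) :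
    Tsum (a + 1) k f ≤ k.factorial * (C * (1 / (1 - θ)) ^ k) := by
  induction k generalizing a C f with
  | zero =>
    have := hf 0 (by simp) (by simp)
    simpa [Tsum, spn] using this
  | succ k ih =>
    refine (Tsum_max _ _ _ hf0).trans ?_
    have h2 : ∀ b ∈ Finset.range (a + 1), Tsum (b + 1) k (shf b f) ≤
        k.factorial * ((C * θ ^ (a - b)) * (1 / (1 - θ)) ^ k) := by
      intro b hb
      have hb : b ≤ a := by simpa [Nat.lt_succ_iff] using hb
      apply ih b _ (by positivity) _ (fun s => hf0 _)
      intro s hs hsb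
      refine (hf (b ::ₘ s) (by simp [hs]) (by simpa using ⟨hb, fun i hi => (hsb i hi).trans hb⟩)).trans ?_
      rw [spn_cons a b s hb hsb, pow_add]; apply le_of_eq; ring
    have h3 : ∑ b ∈ Finset.range (a + 1), θ ^ (a - b) ≤ 1 / (1 - θ) := by
      have := Finset.sum_range_reflect (fun j => θ ^ j) (a+1)
      simp only [Nat.add_sub_cancel] at this
      rw [this, one_div]
      exact (Summable.sum_le_tsum _ (fun i _ => pow_nonneg h0 i)
        (summable_geometric_of_lt_one h0 h1)).trans (tsum_geometric_of_lt_one h0 h1).le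
    have hpos : (0:ℝ) ≤ 1 / (1 - θ) := by
      have : 0 < 1 - θ := by linarith
      positivity
    calc _ ≤ ((k:ℝ) + 1) * ∑ b ∈ Finset.range (a + 1),
          k.factorial * ((C * θ ^ (a - b)) * (1 / (1 - θ)) ^ k) :=
        mul_le_mul_of_nonneg_left (Finset.sum_le_sum h2) (by positivity)
      _ = ((k + 1).factorial : ℝ) * (C * (1 / (1 - θ)) ^ k) *
          ∑ b ∈ Finset.range (a + 1), θ ^ (a - b) := by
        rw [Finset.mul_sum, Finset.mul_sum, Nat.factorial_succ]
        refine Finset.sum_congr rfl fun b _ => ?_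
        push_cast; ring
      _ ≤ ((k + 1).factorial : ℝ) * (C * (1 / (1 - θ)) ^ k) * (1 / (1 - θ)) :=
        mul_le_mul_of_nonneg_left h3 (by positivity)
      _ = _ := by rw [pow_succ]; ring

theorem Tsum_geom_top (θ : ℝ) (h0 : 0 ≤ θ) (h1 : θ < 1) (k n : ℕ) (C : ℝ) (hC : 0 ≤ C)
    (f : Multiset ℕ → ℝ)
    (hf : ∀ a s, Multiset.card s = k → (∀ i ∈ s, i ≤ a) → |f (a ::ₘ s)| ≤ C * θ ^ spn a s) :
    |Tsum n (k + 1) f| ≤ n * ((k + 1).factorial * (C * (1 / (1 - θ)) ^ k)) := by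
  refine (abs_Tsum_le _ _ _).trans ((Tsum_max _ _ _ (fun s => abs_nonneg _)).trans ?_)
  have h2 : ∀ a ∈ Finset.range n, Tsum (a + 1) k (shf a fun s => |f s|) ≤
      k.factorial * (C * (1 / (1 - θ)) ^ k) := fun a _ =>
    Tsum_geom θ h0 h1 k a C hC _ (fun s => abs_nonneg _) (fun s hs hsa => hf a s hs hsa)
  refine (mul_le_mul_of_nonneg_left (Finset.sum_le_sum h2) (by positivity)).trans ?_
  rw [Finset.sum_const, Finset.card_range, nsmul_eq_mul, Nat.factorial_succ]
  apply le_of_eq; push_cast; ring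

/-- cumulants and moments of the total sum -/
theorem Tsum_moment (N : ℕ) (m : Multiset ℕ → ℝ) (h0 : m 0 = 1) (k : ℕ) :
    Tsum N (k + 1) m = ∑ p ∈ Finset.HasAntidiagonal.antidiagonal k,
      (k.choose p.1 : ℝ) * (Tsum N (p.1 + 1) (cml m) * Tsum N p.2 m) := by
  rw [Tsum_succ]
  have h1 : ∀ a, Tsum N k (shf a m) = ∑ p ∈ Finset.HasAntidiagonal.antidiagonal k,
      (k.choose p.1 : ℝ) * (Tsum N p.1 (shf a (cml m)) * Tsum N p.2 m) := by
    intro a; conv_lhs => rw [shf_eq_cnv m h0 a, Tsum_cnv]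
  simp only [h1]
  rw [Finset.sum_comm]
  refine Finset.sum_congr rfl fun p _ => ?_
  rw [Tsum_succ]; simp only [Finset.mul_sum, Finset.sum_mul]

/-! ### Part 3: moments from cumulants -/

section PS
open PowerSeries

def cumGF (κ : ℕ → ℝ) : PowerSeries ℝ := PowerSeries.mk fun k => if k = 0 then 0 else κ k / k.factorial

def momGF (κ : ℕ → ℝ) (U : ℕ) : PowerSeries ℝ :=
  ∑ u ∈ Finset.range (U + 1), ((u.factorial : ℝ)⁻¹) • (cumGF κ) ^ u

theorem deriv_momGF (κ : ℕ → ℝ) (U : ℕ) :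
    PowerSeries.derivative ℝ (momGF κ (U + 1)) = PowerSeries.derivative ℝ (cumGF κ) * momGF κ U := by
  unfold momGF
  rw [Finset.sum_range_succ', map_add, map_sum]
  simp only [Derivation.map_smul, Derivation.leibniz_pow, pow_zero, Derivation.map_one_eq_zero,
    smul_zero, add_zero, Finset.mul_sum]
  refine Finset.sum_congr rfl fun u _ => ?_
  rw [Nat.add_sub_cancel, Nat.factorial_succ]
  have h : ((u:ℝ) + 1) ≠ 0 := by positivity
  have h2 : (u.factorial : ℝ) ≠ 0 := by positivity
  simp only [nsmul_eq_mul, smul_eq_mul, PowerSeries.smul_eq_C_mul]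
  have : ((((u + 1 : ℕ)) : ℕ) : PowerSeries ℝ) = PowerSeries.C ((u : ℝ) + 1) := by
    push_cast; simp
  rw [this]
  have h3 : (PowerSeries.C (((((u + 1) * u.factorial : ℕ)) : ℝ)⁻¹) : PowerSeries ℝ) * PowerSeries.C ((u:ℝ)+1)
      = PowerSeries.C ((u.factorial : ℝ)⁻¹) := by
    rw [← map_mul]; congr 1; push_cast; field_simp
  linear_combination (cumGF κ ^ u * derivative ℝ (cumGF κ)) * h3

theorem coeff_momGF (M κ : ℕ → ℝ) (hM0 : M 0 = 1)
    (hrec : ∀ k, M (k + 1) = ∑ p ∈ Finset.HasAntidiagonal.antidiagonal k,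
      (k.choose p.1 : ℝ) * (κ (p.1 + 1) * M p.2)) (N U : ℕ) (h : N ≤ U) :
    PowerSeries.coeff N (momGF κ U) = M N / N.factorial := by
  induction N using Nat.strong_induction_on generalizing U with
  | _ N ih =>
  cases N with
  | zero =>
    unfold momGF
    rw [Finset.sum_range_succ', map_add, map_sum]
    have hc : PowerSeries.constantCoeff (cumGF κ) = 0 := by
      rw [← PowerSeries.coeff_zero_eq_constantCoeff_apply, cumGF, PowerSeries.coeff_mk]; simp
    simp [hc, hM0]
  | succ N =>
    obtain ⟨U, rfl⟩ : ∃ U', U = U' + 1 := ⟨U - 1, by omega⟩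
    have h1 := congrArg (PowerSeries.coeff N) (deriv_momGF κ U)
    rw [PowerSeries.coeff_derivative, PowerSeries.coeff_mul] at h1
    have h2 : ∀ p ∈ Finset.HasAntidiagonal.antidiagonal N,
        PowerSeries.coeff p.1 (PowerSeries.derivative ℝ (cumGF κ)) * PowerSeries.coeff p.2 (momGF κ U) =
        (N.choose p.1 : ℝ) * (κ (p.1 + 1) * M p.2) / N.factorial := by
      intro p hp
      rw [Finset.HasAntidiagonal.mem_antidiagonal] at hp
      rw [ih p.2 (by omega) U (by omega), PowerSeries.coeff_derivative, cumGF, PowerSeries.coeff_mk,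
        if_neg (by omega)]
      have := Nat.choose_mul_factorial_mul_factorial (n := N) (k := p.1) (by omega)
      rw [show N - p.1 = p.2 by omega] at this
      rw [← this, Nat.factorial_succ]
      have a1 : (p.1.factorial : ℝ) ≠ 0 := by positivity
      have a2 : (p.2.factorial : ℝ) ≠ 0 := by positivity
      have a3 : ((p.1 : ℝ) + 1) ≠ 0 := by positivity
      have a4 : (N.choose p.1 : ℝ) ≠ 0 := by
        have := Nat.choose_pos (n := N) (k := p.1) (by omega)
        positivity
      push_cast
      field_simp
    rw [Finset.sum_congr rfl h2, ← Finset.sum_div, ← hrec] at h1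
    rw [Nat.factorial_succ]
    have a3 : ((N : ℝ) + 1) ≠ 0 := by positivity
    have a1 : (N.factorial : ℝ) ≠ 0 := by positivity
    push_cast
    field_simp
    field_simp at h1
    linarith

theorem coeff_cumGF_pow (κ : ℕ → ℝ) (hκ1 : κ 1 = 0) (u L : ℕ) :
    PowerSeries.coeff L (cumGF κ ^ u) =
      ∑ k ∈ Finset.univ.filter
        (fun k : Fin u → Fin (L + 1) => (∀ i, 2 ≤ (k i : ℕ)) ∧ ∑ i, (k i : ℕ) = L),
      ∏ i, (κ (k i) / ((k i : ℕ).factorial : ℝ)) := by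
  have h := PowerSeries.coeff_prod (fun _ : Fin u => cumGF κ) L Finset.univ
  rw [Finset.prod_const, Finset.card_univ, Fintype.card_fin] at h
  rw [h]
  symm
  refine Finset.sum_bij_ne_zero (fun k _ _ => Finsupp.equivFunOnFinite.symm fun i => (k i : ℕ)) ?_ ?_ ?_ ?_
  · intro k hk _
    have := (Finset.mem_filter.1 hk).2.2
    simp [Finset.mem_finsuppAntidiag, this]
  · intro k1 _ _ k2 _ _ he
    funext i
    have := congrArg (fun f => f i) he
    simp at this
    exact Fin.ext this
  · intro f hf hne
    rw [Finset.mem_finsuppAntidiag] at hf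
    have hle : ∀ i, f i < L + 1 := by
      intro i
      have := Finset.single_le_sum (f := fun i => f i) (fun _ _ => Nat.zero_le _) (Finset.mem_univ i)
      have h2 : ∑ i, f i = L := hf.1
      omega
    have h2 : ∀ i, 2 ≤ f i := by
      intro i
      by_contra hlt
      apply hne
      apply Finset.prod_eq_zero (Finset.mem_univ i)
      rw [cumGF, PowerSeries.coeff_mk]
      rcases (show f i = 0 ∨ f i = 1 by omega) with h | h <;> simp [h, hκ1]
    refine ⟨fun i => ⟨f i, hle i⟩, ?_, ?_, ?_⟩
    · simp [h2]; exact hf.1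
    · rw [← Finset.prod_congr rfl (fun i _ => ?_)]
      · exact hne
      · rw [cumGF, PowerSeries.coeff_mk, if_neg (by have := h2 i; omega)]
    · ext i; simp
  · intro k hk _
    refine Finset.prod_congr rfl fun i _ => ?_
    have := (Finset.mem_filter.1 hk).2.1 i
    rw [cumGF, PowerSeries.coeff_mk, if_neg (by change (k i : ℕ) ≠ 0; omega)]
    rfl

theorem moment_bound (M κ : ℕ → ℝ) (hM0 : M 0 = 1) (hκ1 : κ 1 = 0)
    (hrec : ∀ k, M (k + 1) = ∑ p ∈ Finset.HasAntidiagonal.antidiagonal k,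
      (k.choose p.1 : ℝ) * (κ (p.1 + 1) * M p.2)) (q : ℕ) (hq : 1 ≤ q) :
    M (2 * q) ≤ gaussMoment q * κ 2 ^ q + ∑ u ∈ Finset.Icc 1 (q - 1),
      ((2 * q).factorial : ℝ) / u.factorial * ∑ k ∈ Finset.univ.filter
        (fun k : Fin u → Fin (2 * q + 1) => (∀ i, 2 ≤ (k i : ℕ)) ∧ ∑ i, (k i : ℕ) = 2 * q),
      ∏ i, (|κ (k i)| / ((k i : ℕ).factorial : ℝ)) := by
  have h := coeff_momGF M κ hM0 hrec (2 * q) (2 * q) le_rfl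
  have hf : ((2 * q).factorial : ℝ) ≠ 0 := by positivity
  have hf0 : (0:ℝ) < ((2 * q).factorial : ℝ) := by positivity
  have hM : M (2 * q) = ∑ u ∈ Finset.range (2 * q + 1),
      ((2 * q).factorial : ℝ) / u.factorial * PowerSeries.coeff (2 * q) (cumGF κ ^ u) := by
    rw [eq_div_iff hf] at h
    rw [← h, momGF, map_sum, Finset.sum_mul]
    refine Finset.sum_congr rfl fun u _ => ?_
    rw [PowerSeries.coeff_smul, smul_eq_mul]; field_simp
  have hsplit : Finset.range (2 * q + 1) = insert 0 (insert q (Finset.Icc 1 (q - 1))) ∪ Finset.Icc (q+1) (2*q) := by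
    ext x; simp; omega
  have hbig : ∀ u ∈ Finset.Icc (q+1) (2*q),
      ((2 * q).factorial : ℝ) / u.factorial * PowerSeries.coeff (2 * q) (cumGF κ ^ u) = 0 := by
    intro u hu
    rw [Finset.mem_Icc] at hu
    rw [coeff_cumGF_pow κ hκ1, Finset.filter_false_of_mem, Finset.sum_empty, mul_zero]
    rintro k _ ⟨h1, h2⟩
    have := Finset.sum_le_sum (s := Finset.univ) (fun i _ => h1 i)
    rw [h2] at this
    simp at this
    omega
  have hqq : ((2 * q).factorial : ℝ) / q.factorial * PowerSeries.coeff (2 * q) (cumGF κ ^ q) =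
      gaussMoment q * κ 2 ^ q := by
    rw [coeff_cumGF_pow κ hκ1]
    have hs : Finset.univ.filter
        (fun k : Fin q → Fin (2 * q + 1) => (∀ i, 2 ≤ (k i : ℕ)) ∧ ∑ i, (k i : ℕ) = 2 * q) =
        {fun _ => ⟨2, by omega⟩} := by
      ext k
      simp only [Finset.mem_filter, Finset.mem_univ, true_and, Finset.mem_singleton]
      constructor
      · rintro ⟨h1, h2⟩
        funext i
        have h3 : ∑ i : Fin q, (2:ℕ) = ∑ i, (k i : ℕ) := by rw [h2]; simp [mul_comm]
        have := (Finset.sum_eq_sum_iff_of_le (fun i _ => h1 i)).1 h3 i (Finset.mem_univ i)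
        exact Fin.ext this.symm
      · rintro rfl; simp [mul_comm]
    rw [hs, Finset.sum_singleton, gaussMoment]
    simp
    field_simp
  have h00 : PowerSeries.coeff (2 * q) (cumGF κ ^ 0) = 0 := by
    rw [pow_zero, PowerSeries.coeff_one, if_neg (by omega)]
  rw [hM, hsplit, Finset.sum_union, Finset.sum_eq_zero hbig, Finset.sum_insert, Finset.sum_insert,
    h00, hqq, mul_zero, zero_add, add_zero]
  · gcongr with u hu
    rw [coeff_cumGF_pow κ hκ1]
    refine Finset.sum_le_sum fun k _ => ?_
    refine (le_abs_self _).trans (le_of_eq ?_)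
    rw [Finset.abs_prod]
    refine Finset.prod_congr rfl fun i _ => ?_
    rw [abs_div, Nat.abs_cast]
  · simp; omega
  · simp; omega
  · rw [Finset.disjoint_left]; intro x; simp; omega
end PS


section markov
set_option linter.unusedSectionVars false
set_option linter.unusedVariables false
variable {X : Type*} [MeasurableSpace X]

instance kIter_markov (Q : ProbabilityTheory.Kernel X X) [ProbabilityTheory.IsMarkovKernel Q] (n : ℕ) :
    ProbabilityTheory.IsMarkovKernel (kIter Q n) := by
  induction n with
  | zero => unfold kIter; infer_instance
  | succ n ih => unfold kIter; infer_instance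

/-- stopped path -/
def stp (n : ℕ) (w : ℕ → X) : ℕ → X := fun i => w (min i n)

theorem stp_meas (n : ℕ) : Measurable (stp (X := X) n) :=
  measurable_pi_lambda _ fun i => measurable_pi_apply _

variable {Ω : Type*} [MeasurableSpace Ω] {P : Measure Ω} [IsProbabilityMeasure P]
  {Xs : ℕ → Ω → X} {piQ : Measure X} [IsProbabilityMeasure piQ]
  {Q : ProbabilityTheory.Kernel X X} [ProbabilityTheory.IsMarkovKernel Q]

/-- path -/
def pth (Xs : ℕ → Ω → X) (n : ℕ) (ω : Ω) : ℕ → X := fun i => Xs (min i n) ω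

theorem pth_meas (hch : IsMarkovChain P Xs piQ Q) (n : ℕ) : Measurable (pth Xs n) :=
  measurable_pi_lambda _ fun i => hch.meas _

/-- past sigma-algebra -/
def pastF (Xs : ℕ → Ω → X) (n : ℕ) : MeasurableSpace Ω :=
  ⨆ i ∈ Finset.range (n + 1), MeasurableSpace.comap (Xs i) inferInstance

theorem markov_rect (hch : IsMarkovChain P Xs piQ Q) (n : ℕ) (A : Set (ℕ → X)) (B : Set X)
    (hA : MeasurableSet A) (hB : MeasurableSet B) :
    P (pth Xs n ⁻¹' A ∩ Xs (n+1) ⁻¹' B) = ∫⁻ ω in pth Xs n ⁻¹' A, Q (Xs n ω) B ∂P := by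
  have hFle : pastF Xs n ≤ ‹MeasurableSpace Ω› :=
    iSup₂_le fun i _ => (hch.meas i).comap_le
  have hAF : MeasurableSet[pastF Xs n] (pth Xs n ⁻¹' A) := by
    have : Measurable[pastF Xs n] (pth Xs n) := by
      refine @measurable_pi_lambda _ _ _ (pastF Xs n) _ _ fun i => ?_
      have h1 : MeasurableSpace.comap (Xs (min i n)) inferInstance ≤ pastF Xs n :=
        le_iSup₂_of_le (f := fun i (_ : i ∈ Finset.range (n+1)) =>
          MeasurableSpace.comap (Xs i) inferInstance) (min i n)
          (by simp only [Finset.mem_range]; omega) le_rfl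
      exact (comap_measurable (Xs (min i n))).mono h1 le_rfl
    exact this hA
  have hAm : MeasurableSet (pth Xs n ⁻¹' A) := hFle _ hAF
  have hBm : MeasurableSet (Xs (n+1) ⁻¹' B) := hch.meas _ hB
  let f : X → ℝ := B.indicator 1
  have hf : Measurable f := measurable_one.indicator hB
  have hf1 : ∀ x, |f x| ≤ 1 := by
    intro x; by_cases hx : x ∈ B <;> simp [f, hx]
  have hmk := hch.markov n f hf hf1
  have hIntg : Integrable (fun ω => f (Xs (n+1) ω)) P :=
    Integrable.of_bound (hf.comp (hch.meas _)).aestronglyMeasurable 1 (ae_of_all _ fun ω => hf1 _)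
  have h1 := setIntegral_condExp (m := pastF Xs n) (μ := P) hFle hIntg hAF
  have h2 : ∫ ω in pth Xs n ⁻¹' A, (∫ y, f y ∂(Q (Xs n ω))) ∂P = ∫ ω in pth Xs n ⁻¹' A, f (Xs (n+1) ω) ∂P := by
    rw [← h1]
    exact setIntegral_congr_ae hAm (hmk.mono fun ω h _ => h.symm)
  have h3 : ∫ ω in pth Xs n ⁻¹' A, f (Xs (n+1) ω) ∂P = P.real (pth Xs n ⁻¹' A ∩ Xs (n+1) ⁻¹' B) := by
    have : (fun ω => f (Xs (n+1) ω)) = (Xs (n+1) ⁻¹' B).indicator 1 := by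
      funext ω; simp [f, Set.indicator]
    rw [this]
    change ∫ ω in _, (Xs (n+1) ⁻¹' B).indicator 1 ω ∂P = _
    rw [setIntegral_indicator hBm]
    simp
  have h4 : ∫ ω in pth Xs n ⁻¹' A, (∫ y, f y ∂(Q (Xs n ω))) ∂P
      = (∫⁻ ω in pth Xs n ⁻¹' A, Q (Xs n ω) B ∂P).toReal := by
    have : ∀ ω, (∫ y, f y ∂(Q (Xs n ω))) = (Q (Xs n ω) B).toReal := by
      intro ω
      simp [f, integral_indicator_one hB, Measure.real]
    simp only [this]
    apply integral_toReal
    · exact ((Q.measurable_coe hB).comp (hch.meas n)).aemeasurable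
    · exact ae_of_all _ fun ω => measure_lt_top _ _
  have h5 : (∫⁻ ω in pth Xs n ⁻¹' A, Q (Xs n ω) B ∂P) ≠ ⊤ := by
    refine ((lintegral_mono (g := fun _ => 1) fun ω => prob_le_one).trans_lt ?_).ne
    simp
  rw [← ENNReal.toReal_eq_toReal_iff' (measure_ne_top _ _) h5, ← h4, h2, h3]
  rfl

theorem markov_one (hch : IsMarkovChain P Xs piQ Q) (n : ℕ) :
    P.map (fun ω => (pth Xs n ω, Xs (n+1) ω)) =
      (P.map (pth Xs n)) ⊗ₘ (Q.comap (fun w : ℕ → X => w n) (measurable_pi_apply n)) := by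
  have hW := pth_meas hch n
  have : IsProbabilityMeasure (P.map (pth Xs n)) := Measure.isProbabilityMeasure_map hW.aemeasurable
  have : IsProbabilityMeasure (P.map (fun ω => (pth Xs n ω, Xs (n+1) ω))) :=
    Measure.isProbabilityMeasure_map (hW.prodMk (hch.meas _)).aemeasurable
  apply Measure.ext_prod
  intro A B hA hB
  rw [Measure.map_apply (hW.prodMk (hch.meas _)) (hA.prod hB), Measure.compProd_apply_prod hA hB]
  have : (fun ω => (pth Xs n ω, Xs (n+1) ω)) ⁻¹' (A ×ˢ B) = pth Xs n ⁻¹' A ∩ Xs (n+1) ⁻¹' B := by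
    ext ω; simp
  rw [this, markov_rect hch n A B hA hB]
  rw [setLIntegral_map hA _ hW]
  · simp [Kernel.comap_apply, pth]
  · exact ((Q.comap _ (measurable_pi_apply n)).measurable_coe hB)

theorem markov_lint_one (hch : IsMarkovChain P Xs piQ Q) (n : ℕ) (F : (ℕ → X) × X → ℝ≥0∞)
    (hF : Measurable F) :
    ∫⁻ ω, F (pth Xs n ω, Xs (n+1) ω) ∂P = ∫⁻ ω, ∫⁻ y, F (pth Xs n ω, y) ∂(Q (Xs n ω)) ∂P := by
  have hW := pth_meas hch n
  have : IsProbabilityMeasure (P.map (pth Xs n)) := Measure.isProbabilityMeasure_map hW.aemeasurable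
  have h : ∫⁻ z, F z ∂_ = ∫⁻ z, F z ∂_ := congrArg (fun μ => ∫⁻ z, F z ∂μ) (markov_one hch n)
  rw [lintegral_map hF (hW.prodMk (hch.meas _)), Measure.lintegral_compProd hF, lintegral_map _ hW] at h
  · simpa [Kernel.comap_apply, pth] using h
  · exact hF.lintegral_kernel_prod_right'

theorem markov_lint (hch : IsMarkovChain P Xs piQ Q) (d n : ℕ) (F : (ℕ → X) × X → ℝ≥0∞)
    (hF : Measurable F) :
    ∫⁻ ω, F (pth Xs n ω, Xs (n+d) ω) ∂P =
      ∫⁻ ω, ∫⁻ y, F (pth Xs n ω, y) ∂(kIter Q d (Xs n ω)) ∂P := by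
  induction d generalizing n F with
  | zero =>
    simp only [kIter, add_zero]
    congr 1; funext ω
    rw [Kernel.id_apply, lintegral_dirac']
    exact hF.comp measurable_prodMk_left
  | succ d ih =>
    have e : n + (d + 1) = (n + 1) + d := by ring
    have hs : ∀ ω, stp n (pth Xs (n+1) ω) = pth Xs n ω := by
      intro ω; funext i; simp only [stp, pth]; congr 1; omega
    have h1 := ih (n+1) (fun z => F (stp n z.1, z.2))
      (hF.comp (((stp_meas n).comp measurable_fst).prodMk measurable_snd))
    simp only [hs] at h1
    rw [e, h1]
    have hm : Measurable (fun z : (ℕ → X) × X => ∫⁻ y, F (z.1, y) ∂(kIter Q d z.2)) := by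
      have : Measurable (fun p : ((ℕ → X) × X) × X => F (p.1.1, p.2)) :=
        hF.comp (measurable_fst.fst.prodMk measurable_snd)
      exact Measurable.lintegral_kernel_prod_right' (κ := (kIter Q d).comap Prod.snd measurable_snd) this
    rw [markov_lint_one hch n (fun z => ∫⁻ y, F (z.1, y) ∂(kIter Q d z.2)) hm]
    congr 1; funext ω
    rw [kIter, Kernel.lintegral_comp]
    exact hF.comp measurable_prodMk_left

theorem law_eq (hch : IsMarkovChain P Xs piQ Q) (hinv : piQ.bind (fun x => Q x) = piQ) (n : ℕ) :
    P.map (Xs n) = piQ := by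
  induction n with
  | zero => exact hch.init
  | succ n ih =>
    ext B hB
    rw [Measure.map_apply (hch.meas _) hB]
    have h := markov_rect hch n Set.univ B MeasurableSet.univ hB
    simp only [Set.preimage_univ, Set.univ_inter, Measure.restrict_univ] at h
    rw [h, ← lintegral_map (f := fun x => Q x B) (Q.measurable_coe hB) (hch.meas n), ih]
    conv_rhs => rw [← hinv]
    rw [Measure.bind_apply hB Q.measurable.aemeasurable]

theorem inv_lint (hch : IsMarkovChain P Xs piQ Q) (hinv : piQ.bind (fun x => Q x) = piQ) (d : ℕ)
    (f : X → ℝ≥0∞) (hf : Measurable f) :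
    ∫⁻ x, ∫⁻ y, f y ∂(kIter Q d x) ∂piQ = ∫⁻ x, f x ∂piQ := by
  have h := markov_lint hch d 0 (fun z => f z.2) (hf.comp measurable_snd)
  simp only at h
  rw [← lintegral_map hf (hch.meas _), law_eq hch hinv,
    ← lintegral_map (f := fun x => ∫⁻ y, f y ∂(kIter Q d x)) hf.lintegral_kernel (hch.meas 0),
    law_eq hch hinv] at h
  exact h.symm

theorem markov_law (hch : IsMarkovChain P Xs piQ Q) (d n : ℕ) :
    P.map (fun ω => (pth Xs n ω, Xs (n+d) ω)) =
      (P.map (pth Xs n)) ⊗ₘ ((kIter Q d).comap (fun w : ℕ → X => w n) (measurable_pi_apply n)) := by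
  have hW := pth_meas hch n
  have : IsProbabilityMeasure (P.map (pth Xs n)) := Measure.isProbabilityMeasure_map hW.aemeasurable
  refine Measure.ext_of_lintegral _ fun F hF => ?_
  rw [lintegral_map hF (hW.prodMk (hch.meas _)), Measure.lintegral_compProd hF, lintegral_map _ hW,
    markov_lint hch d n F hF]
  · simp [Kernel.comap_apply, pth]
  · exact hF.lintegral_kernel_prod_right'

theorem markov_int (hch : IsMarkovChain P Xs piQ Q) (d n : ℕ) (Φ : (ℕ → X) → ℝ) (h : X → ℝ)
    (hΦ : Measurable Φ) (hh : Measurable h)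
    (hi : Integrable (fun ω => Φ (pth Xs n ω) * h (Xs (n+d) ω)) P) :
    ∫ ω, Φ (pth Xs n ω) * h (Xs (n+d) ω) ∂P =
      ∫ ω, Φ (pth Xs n ω) * (∫ y, h y ∂(kIter Q d (Xs n ω))) ∂P := by
  have hW := pth_meas hch n
  have : IsProbabilityMeasure (P.map (pth Xs n)) := Measure.isProbabilityMeasure_map hW.aemeasurable
  let G : (ℕ → X) × X → ℝ := fun z => Φ z.1 * h z.2
  have hG : Measurable G := (hΦ.comp measurable_fst).mul (hh.comp measurable_snd)
  have hGi : Integrable G (P.map (fun ω => (pth Xs n ω, Xs (n+d) ω))) := by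
    rw [integrable_map_measure hG.aestronglyMeasurable (hW.prodMk (hch.meas _)).aemeasurable]
    exact hi
  have e1 : ∫ ω, Φ (pth Xs n ω) * h (Xs (n+d) ω) ∂P = ∫ z, G z ∂(P.map (fun ω => (pth Xs n ω, Xs (n+d) ω))) := by
    rw [integral_map (hW.prodMk (hch.meas _)).aemeasurable hG.aestronglyMeasurable]
  rw [e1]
  rw [markov_law hch] at hGi ⊢
  rw [Measure.integral_compProd hGi, integral_map hW.aemeasurable]
  · simp [G, integral_const_mul, Kernel.comap_apply, pth]
  · exact (hG.stronglyMeasurable.integral_kernel_prod_right').aestronglyMeasurable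

end markov

section kernelbound
set_option linter.unusedSectionVars false
set_option linter.unusedVariables false

theorem bern (v τ a : ℝ) (hv : 0 < v) (hτ : 0 < τ) (ha0 : 0 ≤ a) (ha1 : a ≤ 1) :
    v ^ a ≤ τ ^ a * (1 - a) + a * (τ ^ a / τ) * v := by
  have h := _root_.rpow_one_add_le_one_add_mul_self (s := v / τ - 1) (p := a)
    (by have : 0 ≤ v / τ := by positivity
        linarith) ha0 ha1
  have e : 1 + (v / τ - 1) = v / τ := by ring
  rw [e, Real.div_rpow hv.le hτ.le, div_le_iff₀ (by positivity)] at h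
  calc v ^ a ≤ _ := h
    _ = _ := by field_simp; ring

variable {X : Type*} [MeasurableSpace X]

theorem rpow_integrable {μ : Measure X} [IsFiniteMeasure μ] {V : X → ℝ} (hV : Measurable V)
    (hV1 : ∀ x, 1 ≤ V x) (hi : Integrable V μ) {a : ℝ} (ha0 : 0 ≤ a) (ha1 : a ≤ 1) :
    Integrable (fun x => V x ^ a) μ := by
  refine hi.mono' (hV.pow_const a).aestronglyMeasurable (ae_of_all _ fun x => ?_)
  have h0 : 0 < V x := by linarith [hV1 x]
  rw [Real.norm_of_nonneg (by positivity)]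
  calc V x ^ a ≤ V x ^ (1:ℝ) := Real.rpow_le_rpow_of_exponent_le (hV1 x) ha1
    _ = _ := by simp

theorem int_rpow_le {μ : Measure X} [IsFiniteMeasure μ] {V : X → ℝ} (hV : Measurable V)
    (hV1 : ∀ x, 1 ≤ V x) (hi : Integrable V μ) {a τ : ℝ} (ha0 : 0 ≤ a) (ha1 : a ≤ 1) (hτ : 0 < τ) :
    ∫ x, V x ^ a ∂μ ≤ τ ^ a * (1 - a) * μ.real Set.univ + a * (τ ^ a / τ) * ∫ x, V x ∂μ := by
  have h1 : ∫ x, V x ^ a ∂μ ≤ ∫ x, (τ ^ a * (1 - a) + a * (τ ^ a / τ) * V x) ∂μ := by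
    apply integral_mono (rpow_integrable hV hV1 hi ha0 ha1)
    · exact (integrable_const _).add (hi.const_mul _)
    · intro x
      exact bern _ _ _ (by linarith [hV1 x]) hτ ha0 ha1
  rw [integral_add (integrable_const _) (hi.const_mul _), integral_const_mul (a * (τ ^ a / τ)),
    integral_const, smul_eq_mul] at h1
  linarith [mul_comm (μ.real Set.univ) (τ ^ a * (1 - a))]

theorem jensen_rpow {μ : Measure X} [IsProbabilityMeasure μ] {V : X → ℝ} (hV : Measurable V)
    (hV1 : ∀ x, 1 ≤ V x) (hi : Integrable V μ) {a : ℝ} (ha0 : 0 ≤ a) (ha1 : a ≤ 1) :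
    ∫ x, V x ^ a ∂μ ≤ (∫ x, V x ∂μ) ^ a := by
  have hp : 0 < ∫ x, V x ∂μ := by
    have : ∫ x, (1:ℝ) ∂μ ≤ ∫ x, V x ∂μ := integral_mono (integrable_const _) hi hV1
    simp at this; linarith
  have := int_rpow_le hV hV1 hi ha0 ha1 hp
  simp only [probReal_univ] at this
  calc _ ≤ _ := this
    _ = _ := by field_simp; ring

theorem add_sub_meas (μ ν : Measure X) [IsFiniteMeasure μ] [IsFiniteMeasure ν] :
    μ + (ν - μ) = ν + (μ - ν) := by
  have h := Measure.sub_toSignedMeasure_eq_toSignedMeasure_sub (μ := μ) (ν := ν)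
  ext A hA
  have h1 := congrArg (fun s : SignedMeasure X => s A) h
  simp only [_root_.sub_apply, Measure.toSignedMeasure_apply_measurable hA] at h1
  rw [← ENNReal.toReal_eq_toReal_iff' (measure_ne_top _ _) (measure_ne_top _ _)]
  simp only [Measure.real] at h1
  simp only [Measure.add_apply]
  rw [ENNReal.toReal_add (measure_ne_top _ _) (measure_ne_top _ _),
    ENNReal.toReal_add (measure_ne_top _ _) (measure_ne_top _ _)]
  linarith

theorem abs_int_le {μ : Measure X} [IsFiniteMeasure μ] {V : X → ℝ} (hV : Measurable V)
    (hV1 : ∀ x, 1 ≤ V x) (hi : Integrable V μ) {a : ℝ} (ha0 : 0 ≤ a) (ha1 : a ≤ 1)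
    {h : X → ℝ} {H : ℝ} (hh : Measurable h) (hH : ∀ x, |h x| ≤ H * V x ^ a) :
    Integrable h μ ∧ |∫ x, h x ∂μ| ≤ H * ∫ x, V x ^ a ∂μ := by
  have hr := (rpow_integrable hV hV1 hi ha0 ha1).const_mul H
  have hIntg : Integrable h μ := hr.mono' hh.aestronglyMeasurable (ae_of_all _ hH)
  refine ⟨hIntg, ?_⟩
  rw [← integral_const_mul]
  exact (abs_integral_le_integral_abs).trans (integral_mono hIntg.abs hr hH)

theorem tv_bound {μ ν : Measure X} [IsProbabilityMeasure μ] [IsProbabilityMeasure ν] {V : X → ℝ}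
    (hV : Measurable V) (hV1 : ∀ x, 1 ≤ V x) (hiμ : Integrable V μ) (hiν : Integrable V ν)
    {a : ℝ} (ha0 : 0 ≤ a) (ha1 : a ≤ 1)
    {h : X → ℝ} {H B : ℝ} (hH0 : 0 ≤ H) (hh : Measurable h) (hH : ∀ x, |h x| ≤ H * V x ^ a)
    (hB : 0 < B) (htv : wTV V μ ν ≤ B) :
    |∫ x, h x ∂μ - ∫ x, h x ∂ν| ≤ 2 * H * (B / 2) ^ a := by
  have hle1 : μ - ν ≤ μ := Measure.sub_le
  have hle2 : ν - μ ≤ ν := Measure.sub_le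
  have hi1 : Integrable V (μ - ν) := hiμ.mono_measure hle1
  have hi2 : Integrable V (ν - μ) := hiν.mono_measure hle2
  obtain ⟨j1, b1⟩ := abs_int_le hV hV1 hi1 ha0 ha1 hh hH
  obtain ⟨j2, b2⟩ := abs_int_le hV hV1 hi2 ha0 ha1 hh hH
  obtain ⟨jμ, -⟩ := abs_int_le hV hV1 hiμ ha0 ha1 hh hH
  obtain ⟨jν, -⟩ := abs_int_le hV hV1 hiν ha0 ha1 hh hH
  have e : ∫ x, h x ∂μ + ∫ x, h x ∂(ν - μ) = ∫ x, h x ∂ν + ∫ x, h x ∂(μ - ν) := by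
    rw [← integral_add_measure jμ j2, ← integral_add_measure jν j1, add_sub_meas]
  have e' : ∫ x, h x ∂μ - ∫ x, h x ∂ν = ∫ x, h x ∂(μ - ν) - ∫ x, h x ∂(ν - μ) := by linarith
  rw [e']
  have t1 : (μ - ν).real Set.univ ≤ 1 := by
    calc (μ - ν).real Set.univ ≤ μ.real Set.univ :=
          ENNReal.toReal_mono (measure_ne_top _ _) (hle1 _)
      _ = 1 := probReal_univ
  have t2 : (ν - μ).real Set.univ ≤ 1 := by
    calc (ν - μ).real Set.univ ≤ ν.real Set.univ :=
          ENNReal.toReal_mono (measure_ne_top _ _) (hle2 _)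
      _ = 1 := probReal_univ
  have hτ : 0 < B / 2 := by positivity
  have c1 := int_rpow_le hV hV1 hi1 ha0 ha1 hτ
  have c2 := int_rpow_le hV hV1 hi2 ha0 ha1 hτ
  unfold wTV at htv
  set τ := B / 2 with hτd
  have hBt : B = 2 * τ := by rw [hτd]; ring
  have hta : 0 < τ ^ a := by positivity
  have hk : 0 ≤ τ ^ a * (1 - a) := mul_nonneg hta.le (by linarith)
  have hk2 : 0 ≤ a * (τ ^ a / τ) := by positivity
  have hsum : ∫ x, V x ^ a ∂(μ - ν) + ∫ x, V x ^ a ∂(ν - μ) ≤ 2 * τ ^ a := by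
    calc _ ≤ τ ^ a * (1 - a) * ((μ - ν).real Set.univ + (ν - μ).real Set.univ)
        + a * (τ ^ a / τ) * ((∫ x, V x ∂(μ - ν)) + ∫ x, V x ∂(ν - μ)) := by linarith
      _ ≤ τ ^ a * (1 - a) * 2 + a * (τ ^ a / τ) * (2 * τ) := by
          gcongr
          · linarith
          · linarith
      _ = 2 * τ ^ a := by field_simp; ring
  calc |∫ x, h x ∂(μ - ν) - ∫ x, h x ∂(ν - μ)| ≤ |∫ x, h x ∂(μ - ν)| + |∫ x, h x ∂(ν - μ)| := abs_sub _ _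
    _ ≤ H * (∫ x, V x ^ a ∂(μ - ν) + ∫ x, V x ^ a ∂(ν - μ)) := by linarith
    _ ≤ H * (2 * τ ^ a) := by gcongr
    _ = _ := by ring

/-- centred iterated kernel, truncated to the set where V is integrable -/
def cker (Q : ProbabilityTheory.Kernel X X) (V : X → ℝ) (piQ : Measure X) (d : ℕ) (h : X → ℝ)
    (x : X) : ℝ :=
  if (∫⁻ y, ENNReal.ofReal (V y) ∂(kIter Q d x)) < ⊤ then
    ∫ y, h y ∂(kIter Q d x) - ∫ y, h y ∂piQ else 0

variable (Q : ProbabilityTheory.Kernel X X) [ProbabilityTheory.IsMarkovKernel Q]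
  (piQ : Measure X) [IsProbabilityMeasure piQ] (V : X → ℝ)

theorem cker_meas (hV : Measurable V) (d : ℕ) {h : X → ℝ} (hh : Measurable h) :
    Measurable (cker Q V piQ d h) := by
  unfold cker
  refine Measurable.ite ?_ ?_ measurable_const
  · exact measurableSet_lt (hV.ennreal_ofReal.lintegral_kernel) measurable_const
  · exact (hh.stronglyMeasurable.integral_kernel).measurable.sub measurable_const

theorem integrable_of_ofReal (hV : Measurable V) (hV1 : ∀ x, 1 ≤ V x) {μ : Measure X}
    (h : (∫⁻ y, ENNReal.ofReal (V y) ∂μ) < ⊤) : Integrable V μ := by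
  refine ⟨hV.aestronglyMeasurable, ?_⟩
  rw [hasFiniteIntegral_iff_ofReal (ae_of_all _ fun x => by simpa using (by linarith [hV1 x] : (0:ℝ) ≤ V x))]
  exact h

theorem pi_ge {V : X → ℝ} {piQ : Measure X} [IsProbabilityMeasure piQ] {e : ℝ} (hVe : ∀ x, e ≤ V x) (hpiV : Integrable V piQ) :
    e ≤ ∫ x, V x ∂piQ := by
  have : ∫ x, e ∂piQ ≤ ∫ x, V x ∂piQ := integral_mono (integrable_const _) hpiV hVe
  simpa using this

theorem cker_bound (hV : Measurable V) (hVe : ∀ x, Real.exp 1 ≤ V x) (hpiV : Integrable V piQ)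
    {c ρ : ℝ} (hc : 1 ≤ c) (hρ0 : 0 < ρ) (hρ1 : ρ < 1)
    (herg : ∀ ξ : Measure X, IsProbabilityMeasure ξ → Integrable V ξ → ∀ k : ℕ,
      wTV V (ξ.bind (fun x => (kIter Q k) x)) piQ ≤
        c * ((∫ x, V x ∂ξ) + ∫ x, V x ∂piQ) * ρ ^ k)
    (d : ℕ) {a : ℝ} (ha0 : 0 ≤ a) (ha1 : a ≤ 1) {h : X → ℝ} {H : ℝ} (hH0 : 0 ≤ H)
    (hh : Measurable h) (hH : ∀ x, |h x| ≤ H * V x ^ a) (x : X) :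
    |cker Q V piQ d h x| ≤
      H * (2 * (c * (∫ x, V x ∂piQ) / Real.exp 1)) * (ρ ^ a) ^ d * V x ^ a := by
  have he : (1:ℝ) ≤ Real.exp 1 := by
    have := Real.add_one_le_exp (1:ℝ); linarith
  have hV1 : ∀ x, 1 ≤ V x := fun x => he.trans (hVe x)
  set p := ∫ x, V x ∂piQ with hp
  have hpe : Real.exp 1 ≤ p := pi_ge hVe hpiV
  have hVx0 : 0 < V x := by linarith [hV1 x]
  have hp0 : 0 < p := by linarith
  have hrhs : 0 ≤ H * (2 * (c * p / Real.exp 1)) * (ρ ^ a) ^ d * V x ^ a := by positivity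
  unfold cker
  split_ifs with hfin
  swap
  · simpa using hrhs
  have hi := integrable_of_ofReal V hV hV1 hfin
  have hdir : Integrable V (Measure.dirac x) := by
    apply integrable_of_ofReal V hV hV1
    rw [lintegral_dirac' _ hV.ennreal_ofReal]; simp
  have h1 := herg (Measure.dirac x) inferInstance hdir d
  have hb : (Measure.dirac x).bind (fun x => (kIter Q d) x) = kIter Q d x :=
    Measure.dirac_bind (kIter Q d).measurable x
  rw [hb, integral_dirac' _ _ hV.stronglyMeasurable] at h1
  have hB : 0 < c * (V x + p) * ρ ^ d := by positivity
  refine (tv_bound hV hV1 hi hpiV ha0 ha1 hH0 hh hH hB h1).trans ?_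
  set D := c * p / Real.exp 1 with hD
  have hD1 : 1 ≤ D := by
    rw [hD, le_div_iff₀ (by positivity)]; nlinarith
  have hle : c * (V x + p) * ρ ^ d / 2 ≤ D * V x * ρ ^ d := by
    have : (V x + p) / 2 ≤ p * V x / Real.exp 1 := by
      rw [le_div_iff₀ (by positivity)]
      nlinarith [hVe x, mul_le_mul_of_nonneg_right (hVe x) hp0.le, mul_le_mul_of_nonneg_right hpe hVx0.le]
    calc c * (V x + p) * ρ ^ d / 2 = c * ((V x + p) / 2) * ρ ^ d := by ring
      _ ≤ c * (p * V x / Real.exp 1) * ρ ^ d := by gcongr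
      _ = _ := by rw [hD]; ring
  have hD0 : 0 < D := by linarith
  calc 2 * H * (c * (V x + p) * ρ ^ d / 2) ^ a ≤ 2 * H * (D * V x * ρ ^ d) ^ a := by
        gcongr
    _ = 2 * H * (D ^ a * V x ^ a * (ρ ^ a) ^ d) := by
        rw [Real.mul_rpow (by positivity) (by positivity), Real.mul_rpow hD0.le hVx0.le,
          ← Real.rpow_natCast, ← Real.rpow_natCast, ← Real.rpow_mul hρ0.le, ← Real.rpow_mul hρ0.le,
          mul_comm a]
    _ ≤ 2 * H * (D * V x ^ a * (ρ ^ a) ^ d) := by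
        have : D ^ a ≤ D := by
          calc D ^ a ≤ D ^ (1:ℝ) := Real.rpow_le_rpow_of_exponent_le hD1 ha1
            _ = D := by simp
        gcongr
    _ = _ := by ring

end kernelbound

section Kbound
set_option linter.unusedSectionVars false
set_option linter.unusedVariables false

variable {X : Type*} [MeasurableSpace X] {Ω : Type*} [MeasurableSpace Ω]

/-- standing assumptions, `k` being the order of the cumulant -/
structure Setup (Q : ProbabilityTheory.Kernel X X) (piQ : Measure X) (V : X → ℝ) (c ρ : ℝ)
    (P : Measure Ω) (Xs : ℕ → Ω → X) (gb : X → ℝ) (N : ℝ) (k : ℕ) : Prop where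
  hV : Measurable V
  hVe : ∀ x, Real.exp 1 ≤ V x
  hinv : piQ.bind (fun x => Q x) = piQ
  hpiV : Integrable V piQ
  hc : 1 ≤ c
  hρ0 : 0 < ρ
  hρ1 : ρ < 1
  herg : ∀ ξ : Measure X, IsProbabilityMeasure ξ → Integrable V ξ → ∀ k : ℕ,
      wTV V (ξ.bind (fun x => (kIter Q k) x)) piQ ≤
        c * ((∫ x, V x ∂ξ) + ∫ x, V x ∂piQ) * ρ ^ k
  hch : IsMarkovChain P Xs piQ Q
  hg : Measurable gb
  hN0 : 0 ≤ N
  hN : ∀ x, |gb x| ≤ N * V x ^ ((1:ℝ) / k)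
  hk : 1 ≤ k
  hpi0 : ∫ x, gb x ∂piQ = 0

def prd (gb : X → ℝ) (Xs : ℕ → Ω → X) (s : Multiset ℕ) (ω : Ω) : ℝ :=
  (s.map fun i => gb (Xs i ω)).prod

def mom (gb : X → ℝ) (Xs : ℕ → Ω → X) (P : Measure Ω) (s : Multiset ℕ) : ℝ :=
  ∫ ω, prd gb Xs s ω ∂P

def mtm (gb : X → ℝ) (Xs : ℕ → Ω → X) (P : Measure Ω) (t : ℕ) (h : X → ℝ) (s : Multiset ℕ) : ℝ :=
  ∫ ω, prd gb Xs s ω * h (Xs t ω) ∂P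

variable {Q : ProbabilityTheory.Kernel X X} [ProbabilityTheory.IsMarkovKernel Q]
  {piQ : Measure X} [IsProbabilityMeasure piQ] {V : X → ℝ} {c ρ : ℝ}
  {P : Measure Ω} [IsProbabilityMeasure P] {Xs : ℕ → Ω → X} {gb : X → ℝ} {N : ℝ} {k : ℕ}

theorem Setup.hV1 (S : Setup Q piQ V c ρ P Xs gb N k) (x : X) : 1 ≤ V x := by
  have := Real.add_one_le_exp (1:ℝ); linarith [S.hVe x]

theorem Setup.intV (S : Setup Q piQ V c ρ P Xs gb N k) (i : ℕ) :
    Integrable (fun ω => V (Xs i ω)) P := by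
  have h := S.hpiV
  rw [← law_eq S.hch S.hinv i, integrable_map_measure S.hV.aestronglyMeasurable
    (S.hch.meas i).aemeasurable] at h
  exact h

theorem Setup.prd_meas (S : Setup Q piQ V c ρ P Xs gb N k) (s : Multiset ℕ) :
    Measurable (prd gb Xs s) := by
  induction s using Multiset.induction_on with
  | empty => unfold prd; simp
  | cons a s ih =>
    have : prd gb Xs (a ::ₘ s) = fun ω => gb (Xs a ω) * prd gb Xs s ω := by
      funext ω; simp [prd]
    rw [this]
    exact (S.hg.comp (S.hch.meas a)).mul ih

theorem abs_prod_le (y : ℕ → ℝ) (A : ℝ) (hA : 0 ≤ A) (s : Multiset ℕ) (h : ∀ i ∈ s, |y i| ≤ A) :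
    |(s.map y).prod| ≤ A ^ Multiset.card s := by
  induction s using Multiset.induction_on with
  | empty => simp
  | cons a s ih =>
    rw [Multiset.map_cons, Multiset.prod_cons, abs_mul, Multiset.card_cons, pow_succ, mul_comm]
    exact mul_le_mul (ih fun i hi => h i (Multiset.mem_cons_of_mem hi))
      (h a (Multiset.mem_cons_self _ _)) (abs_nonneg _) (by positivity)

/-- total weight of V along s -/
def tot (V : X → ℝ) (Xs : ℕ → Ω → X) (s : Multiset ℕ) (ω : Ω) : ℝ :=
  (s.map fun i => V (Xs i ω)).sum

theorem Setup.tot_int (S : Setup Q piQ V c ρ P Xs gb N k) (s : Multiset ℕ) :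
    Integrable (tot V Xs s) P := by
  induction s using Multiset.induction_on with
  | empty => 
    have : tot V Xs 0 = fun _ : Ω => (0:ℝ) := by funext ω; simp [tot]
    rw [this]; exact integrable_const _
  | cons a s ih =>
    have : tot V Xs (a ::ₘ s) = fun ω => V (Xs a ω) + tot V Xs s ω := by
      funext ω; simp [tot]
    rw [this]
    exact (S.intV a).add ih

theorem Setup.tot_ge (S : Setup Q piQ V c ρ P Xs gb N k) (s : Multiset ℕ) (ω : Ω) (i : ℕ)
    (hi : i ∈ s) : V (Xs i ω) ≤ tot V Xs s ω := by
  unfold tot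
  apply Multiset.single_le_sum
  · intro x hx
    obtain ⟨j, -, rfl⟩ := Multiset.mem_map.1 hx
    linarith [S.hV1 (Xs j ω)]
  · exact Multiset.mem_map_of_mem (fun i => V (Xs i ω)) hi

theorem Setup.integrable_mt (S : Setup Q piQ V c ρ P Xs gb N k) (t : ℕ) (s : Multiset ℕ) (r : ℕ)
    (hr : Multiset.card s + r ≤ k) {h : X → ℝ} {H : ℝ} (hH0 : 0 ≤ H) (hh : Measurable h)
    (hH : ∀ x, |h x| ≤ H * V x ^ ((r:ℝ) / k)) :
    Integrable (fun ω => prd gb Xs s ω * h (Xs t ω)) P := by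
  have hk0 : (0:ℝ) < k := by have := S.hk; positivity
  refine ((S.tot_int (t ::ₘ s)).const_mul (N ^ Multiset.card s * H)).mono'
    ((S.prd_meas s).mul (hh.comp (S.hch.meas t))).aestronglyMeasurable (ae_of_all _ fun ω => ?_)
  set M := tot V Xs (t ::ₘ s) ω with hM
  have hVt : V (Xs t ω) ≤ M := S.tot_ge _ ω t (Multiset.mem_cons_self _ _)
  have hM1 : 1 ≤ M := (S.hV1 _).trans hVt
  have hM0 : 0 < M := by linarith
  have hN0 := S.hN0
  have h1 : |prd gb Xs s ω| ≤ (N * M ^ ((1:ℝ) / k)) ^ Multiset.card s := by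
    apply abs_prod_le _ _ (by positivity)
    intro i hi
    refine (S.hN _).trans ?_
    have h0 : 0 ≤ V (Xs i ω) := by linarith [S.hV1 (Xs i ω)]
    have := S.tot_ge (t ::ₘ s) ω i (Multiset.mem_cons_of_mem hi)
    gcongr
  have h2 : |h (Xs t ω)| ≤ H * M ^ ((r:ℝ) / k) := by
    refine (hH _).trans ?_
    have h0 : 0 ≤ V (Xs t ω) := by linarith [S.hV1 (Xs t ω)]
    gcongr
  rw [Real.norm_eq_abs, abs_mul]
  calc |prd gb Xs s ω| * |h (Xs t ω)| ≤ (N * M ^ ((1:ℝ) / k)) ^ Multiset.card s * (H * M ^ ((r:ℝ) / k)) := by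
        gcongr
    _ = N ^ Multiset.card s * H * M ^ (((Multiset.card s + r : ℕ) : ℝ) / k) := by
        rw [mul_pow, ← Real.rpow_natCast (M ^ ((1:ℝ) / k)), ← Real.rpow_mul hM0.le]
        push_cast
        rw [add_div, Real.rpow_add hM0, one_div_mul_eq_div]
        ring
    _ ≤ N ^ Multiset.card s * H * M := by
        have : M ^ (((Multiset.card s + r : ℕ) : ℝ) / k) ≤ M := by
          calc _ ≤ M ^ (1:ℝ) := by
                apply Real.rpow_le_rpow_of_exponent_le hM1
                rw [div_le_one hk0]; exact_mod_cast hr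
            _ = M := by simp
        gcongr

theorem Setup.integrable_mom (S : Setup Q piQ V c ρ P Xs gb N k) (s : Multiset ℕ)
    (hr : Multiset.card s ≤ k) : Integrable (prd gb Xs s) P := by
  have := S.integrable_mt 0 s 0 (by simpa using hr) (h := fun _ => 1) (H := 1) zero_le_one
    measurable_const (by simp)
  simpa using this

theorem Setup.cker_bound (S : Setup Q piQ V c ρ P Xs gb N k) (d : ℕ) (r : ℕ) (hr1 : 1 ≤ r)
    (hr : r ≤ k) {h : X → ℝ} {H : ℝ} (hH0 : 0 ≤ H) (hh : Measurable h)
    (hH : ∀ x, |h x| ≤ H * V x ^ ((r:ℝ) / k)) (x : X) :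
    |cker Q V piQ d h x| ≤
      (H * (2 * (c * (∫ x, V x ∂piQ) / Real.exp 1)) * (ρ ^ ((1:ℝ)/k)) ^ d) * V x ^ ((r:ℝ)/k) := by
  have hk0 : (0:ℝ) < k := by have := S.hk; positivity
  have hVx : 0 < V x := by linarith [S.hV1 x]
  have hp : 0 ≤ ∫ x, V x ∂piQ := integral_nonneg fun x => by
    have := S.hV1 x
    show (0:ℝ) ≤ V x
    linarith
  have hc := S.hc
  have hρ := S.hρ0
  refine (_root_.cker_bound Q piQ V S.hV S.hVe S.hpiV S.hc S.hρ0 S.hρ1 S.herg d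
    (a := (r:ℝ)/k) (by positivity) (by rw [div_le_one hk0]; exact_mod_cast hr) hH0 hh hH x).trans ?_
  have : ρ ^ ((r:ℝ)/k) ≤ ρ ^ ((1:ℝ)/k) := by
    apply Real.rpow_le_rpow_of_exponent_ge S.hρ0 S.hρ1.le
    gcongr
    exact_mod_cast hr1
  gcongr

theorem Setup.cker_ae (S : Setup Q piQ V c ρ P Xs gb N k) (d j : ℕ) (h : X → ℝ) :
    ∀ᵐ ω ∂P, ∫ y, h y ∂(kIter Q d (Xs j ω)) = cker Q V piQ d h (Xs j ω) + ∫ y, h y ∂piQ := by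
  have h1 : ∫⁻ x, ∫⁻ y, ENNReal.ofReal (V y) ∂(kIter Q d x) ∂piQ ≠ ⊤ := by
    rw [inv_lint S.hch S.hinv d _ S.hV.ennreal_ofReal]
    exact S.hpiV.lintegral_lt_top.ne
  have h2 := ae_lt_top (S.hV.ennreal_ofReal.lintegral_kernel (κ := kIter Q d)) h1
  rw [← law_eq S.hch S.hinv j] at h2
  filter_upwards [ae_of_ae_map (S.hch.meas j).aemeasurable h2] with ω hω
  unfold cker
  rw [if_pos hω]; ring

theorem Setup.mtm_step (S : Setup Q piQ V c ρ P Xs gb N k) (t j : ℕ) (hjt : j ≤ t) (s : Multiset ℕ)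
    (hs : ∀ i ∈ s, i ≤ j) (r : ℕ) (hr1 : 1 ≤ r)
    (hr : Multiset.card s + r ≤ k) {h : X → ℝ} {H : ℝ} (hH0 : 0 ≤ H) (hh : Measurable h)
    (hH : ∀ x, |h x| ≤ H * V x ^ ((r:ℝ) / k)) :
    mtm gb Xs P t h s = mtm gb Xs P j (cker Q V piQ (t - j) h) s
      + (∫ x, h x ∂piQ) * mom gb Xs P s := by
  have hc := S.hc
  have hρ := S.hρ0
  have hp : 0 ≤ ∫ x, V x ∂piQ := integral_nonneg fun x => by
    have := S.hV1 x
    show (0:ℝ) ≤ V x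
    linarith
  let Φ : (ℕ → X) → ℝ := fun w => (s.map fun i => gb (w i)).prod
  have hΦ : Measurable Φ := by
    have : ∀ s : Multiset ℕ, Measurable (fun w : ℕ → X => (s.map fun i => gb (w i)).prod) := by
      intro s
      induction s using Multiset.induction_on with
      | empty => simp
      | cons a s ih =>
        simp only [Multiset.map_cons, Multiset.prod_cons]
        exact (S.hg.comp (measurable_pi_apply a)).mul ih
    exact this s
  have hΦe : ∀ ω, Φ (pth Xs j ω) = prd gb Xs s ω := by
    intro ω
    simp only [Φ, prd]
    congr 1
    apply Multiset.map_congr rfl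
    intro i hi
    simp only [pth]
    rw [min_eq_left (hs i hi)]
  have ht : j + (t - j) = t := by omega
  have hi := S.integrable_mt t s r hr hH0 hh hH
  have h1 := markov_int S.hch (t - j) j Φ h hΦ hh (by simpa only [hΦe, ht] using hi)
  simp only [hΦe, ht] at h1
  unfold mtm
  rw [h1]
  have h2 : ∫ ω, prd gb Xs s ω * (∫ y, h y ∂(kIter Q (t-j) (Xs j ω))) ∂P
      = ∫ ω, (prd gb Xs s ω * cker Q V piQ (t-j) h (Xs j ω) + (∫ x, h x ∂piQ) * prd gb Xs s ω) ∂P := by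
    apply integral_congr_ae
    filter_upwards [S.cker_ae (t-j) j h] with ω hω
    rw [hω]; ring
  rw [h2, integral_add, integral_const_mul]
  · rfl
  · exact S.integrable_mt j s r hr (H := H * (2 * (c * (∫ x, V x ∂piQ) / Real.exp 1)) * (ρ ^ ((1:ℝ)/k)) ^ (t-j))
      (by positivity) (cker_meas Q piQ V S.hV _ hh)
      (S.cker_bound (t-j) r hr1 (by omega) hH0 hh hH)
  · exact (S.integrable_mom s (by omega)).const_mul _

theorem mtm_cons (t : ℕ) (h : X → ℝ) (s : Multiset ℕ) :
    mtm gb Xs P t h (t ::ₘ s) = mtm gb Xs P t (fun x => gb x * h x) s := by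
  unfold mtm prd
  congr 1; funext ω
  rw [Multiset.map_cons, Multiset.prod_cons]; ring

theorem shf_mom (t : ℕ) : shf t (mom gb Xs P) = mtm gb Xs P t gb := by
  funext s
  unfold shf mom mtm prd
  congr 1; funext ω
  rw [Multiset.map_cons, Multiset.prod_cons]; ring

theorem mom_zero : mom gb Xs P 0 = 1 := by
  simp [mom, prd]

def Kf (gb : X → ℝ) (Xs : ℕ → Ω → X) (P : Measure Ω) (t : ℕ) (h : X → ℝ) : Multiset ℕ → ℝ :=
  cnv (mtm gb Xs P t h) (inv' (mom gb Xs P))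

theorem Setup.Kf_step (S : Setup Q piQ V c ρ P Xs gb N k) (t j : ℕ) (hjt : j ≤ t) (s : Multiset ℕ)
    (hs : ∀ i ∈ s, i ≤ j) (r : ℕ) (hr1 : 1 ≤ r)
    (hr : Multiset.card s + 1 + r ≤ k) {h : X → ℝ} {H : ℝ} (hH0 : 0 ≤ H) (hh : Measurable h)
    (hH : ∀ x, |h x| ≤ H * V x ^ ((r:ℝ) / k)) :
    Kf gb Xs P t h (j ::ₘ s) = Kf gb Xs P j (fun x => gb x * cker Q V piQ (t - j) h x) s
      - cnv (Kf gb Xs P j gb) (Kf gb Xs P j (cker Q V piQ (t - j) h)) s := by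
  set m := mom gb Xs P with hm
  have hm0 : m 0 = 1 := mom_zero
  set h' := cker Q V piQ (t - j) h with hh'
  set I := ∫ x, h x ∂piQ with hI
  have hKj : cnv (shf j m) (inv' m) = Kf gb Xs P j gb := by
    rw [hm, shf_mom]; rfl
  have e1 : cnv (mtm gb Xs P t h) (shf j (inv' m)) s
      = - cnv (Kf gb Xs P j gb) (Kf gb Xs P j h') s - I * Kf gb Xs P j gb s := by
    rw [shf_inv m hm0 j, hKj]
    have a1 : cnv (mtm gb Xs P t h) (fun s => -cnv (Kf gb Xs P j gb) (inv' m) s) s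
        = - cnv (mtm gb Xs P t h) (cnv (Kf gb Xs P j gb) (inv' m)) s := by
      have := cnv_smul_left (-1) (cnv (Kf gb Xs P j gb) (inv' m)) (mtm gb Xs P t h) s
      rw [cnv_comm, cnv_comm (mtm gb Xs P t h)]
      simpa using this
    rw [a1]
    have a2 : cnv (mtm gb Xs P t h) (cnv (Kf gb Xs P j gb) (inv' m)) s
        = cnv (fun u => mtm gb Xs P j h' u + I * m u) (cnv (Kf gb Xs P j gb) (inv' m)) s := by
      refine cnv_congr (fun u hu => ?_) (fun _ _ => rfl)
      have := Multiset.card_le_card hu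
      exact S.mtm_step t j hjt u (fun i hi => hs i (Multiset.mem_of_le hu hi)) r hr1 (by omega) hH0 hh hH
    rw [a2, cnv_add_left, cnv_smul_left, cnv_comm (Kf gb Xs P j gb) (inv' m), ← cnv_assoc, ← cnv_assoc,
      cnv_inv m hm0, cnv_comm dlt, cnv_dlt]
    have a3 : cnv (mtm gb Xs P j h') (inv' m) = Kf gb Xs P j h' := rfl
    rw [a3, cnv_comm (Kf gb Xs P j h')]
    ring
  have e2 : cnv (shf j (mtm gb Xs P t h)) (inv' m) s
      = Kf gb Xs P j (fun x => gb x * h' x) s + I * Kf gb Xs P j gb s := by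
    have b1 : cnv (shf j (mtm gb Xs P t h)) (inv' m) s
        = cnv (fun u => mtm gb Xs P j (fun x => gb x * h' x) u + I * shf j m u) (inv' m) s := by
      refine cnv_congr (fun u hu => ?_) (fun _ _ => rfl)
      have := Multiset.card_le_card hu
      unfold shf
      rw [← mtm_cons]
      refine S.mtm_step t j hjt (j ::ₘ u) (fun i hi => ?_) r hr1 (by rw [Multiset.card_cons]; omega) hH0 hh hH
      rcases Multiset.mem_cons.1 hi with rfl | hi
      · exact le_rfl
      · exact hs i (Multiset.mem_of_le hu hi)
    rw [b1, cnv_add_left, cnv_smul_left, hKj]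
    rfl
  unfold Kf at *
  rw [cnv_cons, e1, e2]
  ring

theorem abs_cnv_le (f g f' g' : Multiset ℕ → ℝ) (A : ℝ) (s : Multiset ℕ)
    (h : ∀ C D, C + D = s → |f C * g D| ≤ A * (f' C * g' D)) :
    |cnv f g s| ≤ A * cnv f' g' s := by
  unfold cnv
  refine (Multiset.abs_sum_le_sum_abs).trans ?_
  rw [← Multiset.sum_map_mul_left, Multiset.map_map]
  apply Multiset.sum_map_le_sum_map
  rintro ⟨C, D⟩ hp
  exact h C D (Multiset.mem_antidiagonal.1 hp)

theorem exists_max_cons (s : Multiset ℕ) (l : ℕ) (hs : Multiset.card s = l + 1) :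
    ∃ j s', s = j ::ₘ s' ∧ Multiset.card s' = l ∧ ∀ i ∈ s', i ≤ j := by
  have hne : s.toFinset.Nonempty := by
    have : s ≠ 0 := by rintro rfl; simp at hs
    obtain ⟨a, ha⟩ := Multiset.exists_mem_of_ne_zero this
    exact ⟨a, by simpa using ha⟩
  have hmem : s.toFinset.max' hne ∈ s := by simpa using s.toFinset.max'_mem hne
  refine ⟨s.toFinset.max' hne, s.erase (s.toFinset.max' hne), (Multiset.cons_erase hmem).symm, ?_, ?_⟩
  · rw [Multiset.card_erase_of_mem hmem, hs]; rfl
  · intro i hi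
    exact s.toFinset.le_max' i (by simpa using Multiset.mem_of_mem_erase hi)

theorem Setup.Kf_bound (S : Setup Q piQ V c ρ P Xs gb N k) (l : ℕ) :
    ∀ s : Multiset ℕ, Multiset.card s = l → ∀ t : ℕ, (∀ i ∈ s, i ≤ t) → ∀ r : ℕ, 1 ≤ r → l + r ≤ k →
    ∀ (h : X → ℝ) (H : ℝ), 0 ≤ H → Measurable h → (∀ x, |h x| ≤ H * V x ^ ((r:ℝ) / k)) →
    |Kf gb Xs P t h s| ≤ H * (N * (2 * (c * (∫ x, V x ∂piQ) / Real.exp 1))) ^ l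
      * ((∫ x, V x ∂piQ) ^ ((1:ℝ)/k)) ^ (l + r) * l.factorial * (ρ ^ ((1:ℝ)/k)) ^ spn t s := by
  set β := 2 * (c * (∫ x, V x ∂piQ) / Real.exp 1) with hβ
  set p := (∫ x, V x ∂piQ) ^ ((1:ℝ)/k) with hp
  set θ := ρ ^ ((1:ℝ)/k) with hθ
  have hk0 : (0:ℝ) < k := by have := S.hk; positivity
  have hpi0 : 0 ≤ ∫ x, V x ∂piQ := integral_nonneg fun x => by
    have := S.hV1 x
    show (0:ℝ) ≤ V x
    linarith
  have hc := S.hc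
  have hρ := S.hρ0
  have hN0 := S.hN0
  have hβ0 : 0 ≤ β := by positivity
  have hp0 : 0 ≤ p := by positivity
  have hθ0 : 0 < θ := by positivity
  have hθ1 : θ ≤ 1 := Real.rpow_le_one S.hρ0.le S.hρ1.le (by positivity)
  induction l using Nat.strong_induction_on with
  | _ l ih =>
  intro s hsl t hst r hr1 hr h H hH0 hh hH
  rcases Nat.eq_zero_or_pos l with hl | hl
  · subst hl
    have hs0 : s = 0 := by simpa using hsl
    subst hs0
    have e : Kf gb Xs P t h 0 = ∫ x, h x ∂piQ := by
      unfold Kf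
      rw [cnv_zero, inv'_zero, mul_one]
      unfold mtm
      rw [← law_eq S.hch S.hinv t, integral_map (S.hch.meas t).aemeasurable hh.aestronglyMeasurable]
      simp [prd]
    have ha1 : (r:ℝ)/k ≤ 1 := by rw [div_le_one hk0]; exact_mod_cast (by omega : r ≤ k)
    have h1 := (abs_int_le S.hV S.hV1 S.hpiV (a := (r:ℝ)/k) (by positivity) ha1 hh hH).2
    have h2 := jensen_rpow S.hV S.hV1 S.hpiV (a := (r:ℝ)/k) (by positivity) ha1
    have h3 : (∫ x, V x ∂piQ) ^ ((r:ℝ)/k) = p ^ r := by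
      rw [hp, ← Real.rpow_natCast, ← Real.rpow_mul hpi0, one_div_mul_eq_div]
    rw [e]
    simp only [pow_zero, mul_one, zero_add, Nat.factorial_zero, Nat.cast_one, spn, Multiset.map_zero,
      Multiset.sup_zero, Nat.bot_eq_zero]
    calc _ ≤ _ := h1
      _ ≤ H * p ^ r := by rw [← h3]; gcongr
  · obtain ⟨l', rfl⟩ : ∃ l', l = l' + 1 := ⟨l - 1, by omega⟩
    obtain ⟨j, s', rfl, hs'l, hs'⟩ := exists_max_cons s l' hsl
    have hjt : j ≤ t := hst j (Multiset.mem_cons_self _ _)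
    rw [S.Kf_step t j hjt s' hs' r hr1 (by omega) hH0 hh hH]
    set h' := cker Q V piQ (t - j) h with hh'
    have hh'm : Measurable h' := cker_meas Q piQ V S.hV _ hh
    have hh'b : ∀ x, |h' x| ≤ (H * β * θ ^ (t - j)) * V x ^ ((r:ℝ)/k) :=
      S.cker_bound (t - j) r hr1 (by omega) hH0 hh hH
    have hH'0 : 0 ≤ H * β * θ ^ (t - j) := by positivity
    have hgh : ∀ x, |gb x * h' x| ≤ (N * (H * β * θ ^ (t - j))) * V x ^ (((r+1 : ℕ):ℝ)/k) := by
      intro x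
      have hVx : 0 < V x := by linarith [S.hV1 x]
      rw [abs_mul]
      calc |gb x| * |h' x| ≤ (N * V x ^ ((1:ℝ) / k)) * ((H * β * θ ^ (t - j)) * V x ^ ((r:ℝ)/k)) :=
            mul_le_mul (S.hN x) (hh'b x) (abs_nonneg _) (by positivity)
        _ = _ := by
          push_cast
          rw [add_div, Real.rpow_add hVx]; ring
    have T1 := ih l' (by omega) s' hs'l j hs' (r+1) (by omega) (by omega) (fun x => gb x * h' x) _
      (by positivity) (S.hg.mul hh'm) hgh
    have hgb1 : ∀ x, |gb x| ≤ N * V x ^ (((1:ℕ):ℝ)/k) := by simpa using S.hN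
    have T2 : |cnv (Kf gb Xs P j gb) (Kf gb Xs P j h') s'| ≤
        (H * (N * β) ^ (l' + 1) * p ^ (l' + 1 + r) * θ ^ (t - j + spn j s')) * (l' * l'.factorial) := by
      have hcf := cnv_fact s'
      rw [hs'l] at hcf
      rw [← hcf]
      apply abs_cnv_le
      intro C D hCD
      have hcard : Multiset.card C + Multiset.card D = l' := by
        rw [← Multiset.card_add, hCD, hs'l]
      have hCs : ∀ i ∈ C, i ≤ j := fun i hi => hs' i (by rw [← hCD]; exact Multiset.mem_add.2 (Or.inl hi))
      have hDs : ∀ i ∈ D, i ≤ j := fun i hi => hs' i (by rw [← hCD]; exact Multiset.mem_add.2 (Or.inr hi))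
      by_cases hC0 : Multiset.card C = 0
      · have : C = 0 := by simpa using hC0
        subst this
        have e : Kf gb Xs P j gb 0 = 0 := by
          unfold Kf
          rw [cnv_zero, inv'_zero, mul_one]
          unfold mtm
          rw [← S.hpi0, ← law_eq S.hch S.hinv j, integral_map (S.hch.meas j).aemeasurable S.hg.aestronglyMeasurable]
          simp [prd]
        rw [e]; simp
      · rw [if_neg hC0]
        have b1 := ih (Multiset.card C) (by omega) C rfl j hCs 1 le_rfl (by omega) gb N hN0 S.hg hgb1
        have b2 := ih (Multiset.card D) (by omega) D rfl j hDs r hr1 (by omega) h' _ hH'0 hh'm hh'b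
        rw [abs_mul]
        have hspn : θ ^ (spn j C + spn j D) ≤ θ ^ spn j s' := by
          apply pow_le_pow_of_le_one hθ0.le hθ1
          rw [← hCD]; exact spn_add j C D
        calc _ ≤ _ := mul_le_mul b1 b2 (abs_nonneg _) (by positivity)
          _ = (H * (N * β) ^ (Multiset.card C + Multiset.card D + 1) * p ^ (Multiset.card C + Multiset.card D + 1 + r) * θ ^ (t - j) * θ ^ (spn j C + spn j D))
              * ((Multiset.card C).factorial * (Multiset.card D).factorial) := by ring
          _ ≤ (H * (N * β) ^ (Multiset.card C + Multiset.card D + 1) * p ^ (Multiset.card C + Multiset.card D + 1 + r) * θ ^ (t - j) * θ ^ (spn j s'))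
              * ((Multiset.card C).factorial * (Multiset.card D).factorial) := by gcongr
          _ = _ := by rw [hcard, pow_add θ]; ring
    rw [spn_cons t j s' hjt hs']
    calc _ ≤ _ := abs_sub _ _
      _ ≤ _ := add_le_add T1 T2
      _ = _ := by
        rw [Nat.factorial_succ]; push_cast; ring

theorem Setup.cml_bound (S : Setup Q piQ V c ρ P Xs gb N k) (a : ℕ) (s : Multiset ℕ)
    (hs : Multiset.card s + 1 = k) (hsa : ∀ i ∈ s, i ≤ a) :
    |cml (mom gb Xs P) (a ::ₘ s)| ≤ N * (N * (2 * (c * (∫ x, V x ∂piQ) / Real.exp 1))) ^ (k - 1)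
      * (∫ x, V x ∂piQ) * (k-1).factorial * (ρ ^ ((1:ℝ)/k)) ^ spn a s := by
  rw [cml_cons _ mom_zero, shf_mom]
  have hpi0 : 0 ≤ ∫ x, V x ∂piQ := integral_nonneg fun x => by
    have := S.hV1 x
    show (0:ℝ) ≤ V x
    linarith
  have h := S.Kf_bound (k-1) s (by omega) a hsa 1 le_rfl (by omega) gb N S.hN0 S.hg (by simpa using S.hN)
  have e : ((∫ x, V x ∂piQ) ^ ((1:ℝ)/k)) ^ (k - 1 + 1) = ∫ x, V x ∂piQ := by
    rw [show k - 1 + 1 = k by omega, ← Real.rpow_natCast, ← Real.rpow_mul hpi0]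
    have : (k:ℝ) ≠ 0 := by have := S.hk; positivity
    field_simp; simp
  rw [e] at h
  exact h

end Kbound

section assembly
set_option linter.unusedSectionVars false
set_option linter.unusedVariables false

theorem geom_log_bound (ρ : ℝ) (hρ0 : 0 < ρ) (hρ1 : ρ < 1) (k : ℕ) (hk : 1 ≤ k) :
    (1 / (1 - ρ ^ ((1:ℝ)/k))) ^ (k - 1) ≤
      1 / ρ ^ ((1:ℝ)/2) * (k / Real.log (1 / ρ)) ^ (k - 1) := by
  set L := Real.log (1 / ρ) with hL
  have hLρ : Real.log ρ = -L := by rw [hL, one_div, Real.log_inv]; ring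
  have hL0 : 0 < L := Real.log_pos (by rw [lt_div_iff₀ hρ0]; linarith)
  have hk0 : (0:ℝ) < k := by positivity
  set l := L / k with hl
  have hl0 : 0 < l := by positivity
  have e1 : ρ ^ ((1:ℝ)/k) = Real.exp (-l) := by
    rw [Real.rpow_def_of_pos hρ0, hLρ, hl]; congr 1; ring
  have e2 : 1 / ρ ^ ((1:ℝ)/2) = Real.exp (L / 2) := by
    rw [Real.rpow_def_of_pos hρ0, hLρ, one_div, ← Real.exp_neg]; congr 1; ring
  rw [e1, e2]
  have h1 : Real.exp (-l) < 1 := by rw [Real.exp_lt_one_iff]; linarith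
  have h2 : 1 / (1 - Real.exp (-l)) ≤ Real.exp (l/2) * (k / L) := by
    have hs : l / 2 ≤ Real.sinh (l/2) := Real.self_le_sinh_iff.2 (by positivity)
    rw [Real.sinh_eq] at hs
    have h3 : Real.exp (l/2) * (1 - Real.exp (-l)) = Real.exp (l/2) - Real.exp (-(l/2)) := by
      rw [mul_sub, ← Real.exp_add]; congr 1
      · ring
      · congr 1; ring
    have hkl : (k:ℝ) / L = 1 / l := by rw [hl]; field_simp
    rw [hkl, div_le_iff₀ (by linarith)]
    have : Real.exp (l/2) * (1 / l) * (1 - Real.exp (-l)) = (Real.exp (l/2) * (1 - Real.exp (-l))) / l := by ring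
    rw [this, h3, le_div_iff₀ hl0]
    linarith
  have h0 : 0 ≤ 1 / (1 - Real.exp (-l)) := by
    have : 0 < 1 - Real.exp (-l) := by linarith
    positivity
  calc (1 / (1 - Real.exp (-l))) ^ (k-1) ≤ (Real.exp (l/2) * (k / L)) ^ (k-1) := by gcongr
    _ = Real.exp (l/2 * (k-1 : ℕ)) * (k/L) ^ (k-1) := by
        rw [mul_pow, ← Real.exp_nat_mul, mul_comm (l/2)]
    _ ≤ Real.exp (L/2) * (k/L) ^ (k-1) := by
        gcongr
        have : ((k-1 : ℕ):ℝ) ≤ k := by exact_mod_cast Nat.sub_le _ _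
        calc l/2 * (k-1 : ℕ) ≤ l / 2 * k := by gcongr
          _ = L / 2 := by rw [hl]; field_simp

theorem scalar_bound (c p N L R : ℝ) (hc : 1 ≤ c) (hp : 0 ≤ p) (hN : 0 ≤ N) (hL : 0 < L) (hR : 0 ≤ R)
    (k : ℕ) (hk : 2 ≤ k) :
    (N * (N * (2 * (c * p / Real.exp 1))) ^ (k - 1) * p * (k-1).factorial)
      * (R * (k / L) ^ (k - 1)) ≤ (k.factorial : ℝ)^2 * (R * L * (2 * c * p * N / L) ^ k) := by
  obtain ⟨j, rfl⟩ : ∃ j, k = j + 1 := ⟨k - 1, by omega⟩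
  simp only [Nat.add_sub_cancel]
  have hfac : ((j+1 : ℕ):ℝ) ^ (j+1) / ((j+1).factorial : ℝ) ≤ Real.exp ((j+1 : ℕ):ℝ) :=
    Real.pow_div_factorial_le_exp _ (by positivity) _
  have hj : (1:ℝ) ≤ j := by exact_mod_cast (by omega : 1 ≤ j)
  have hf1 : ((j+1).factorial : ℝ) = (j+1) * j.factorial := by
    rw [Nat.factorial_succ]; push_cast; ring
  have hjf : (0:ℝ) < j.factorial := by positivity
  have he3 : Real.exp 1 ≤ 3 := Real.exp_one_lt_three.le
  have hexp : Real.exp ((j+1 : ℕ):ℝ) = Real.exp 1 * Real.exp 1 ^ j := by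
    rw [← Real.exp_nat_mul, ← Real.exp_add]; push_cast; congr 1; ring
  have h1 : ((j+1 : ℕ):ℝ) ^ j ≤ j.factorial * (3 * Real.exp 1 ^ j) := by
    rw [div_le_iff₀ (by positivity), hf1, pow_succ, hexp] at hfac
    push_cast at hfac ⊢
    have hj1 : (0:ℝ) < j + 1 := by positivity
    have : ((j:ℝ)+1)^j * (j+1) ≤ (j.factorial * (3 * Real.exp 1 ^ j)) * (j+1) := by
      calc _ ≤ _ := hfac
        _ ≤ 3 * Real.exp 1 ^ j * ((j+1) * j.factorial) := by gcongr
        _ = _ := by ring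
    exact le_of_mul_le_mul_right this hj1
  have h2 : (((j+1 : ℕ):ℝ) / Real.exp 1) ^ j ≤ 3 * j.factorial := by
    rw [div_pow, div_le_iff₀ (by positivity)]
    calc _ ≤ _ := h1
      _ = _ := by ring
  calc N * (N * (2 * (c * p / Real.exp 1))) ^ j * p * j.factorial * (R * (((j+1 : ℕ):ℝ) / L) ^ j)
      = (((j+1 : ℕ):ℝ) / Real.exp 1) ^ j * j.factorial * (R * p * N * (2 * c * p * N / L) ^ j) := by
        simp only [mul_pow, div_pow]; ring
    _ ≤ (3 * j.factorial) * j.factorial * (R * (2 * c * p) * N * (2 * c * p * N / L) ^ j) := by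
        gcongr
        nlinarith
    _ ≤ (4 * j.factorial) * j.factorial * (R * (2 * c * p) * N * (2 * c * p * N / L) ^ j) := by
        gcongr
        norm_num
    _ = 4 * (j.factorial ^ 2 * (R * (2 * c * p) * N * (2 * c * p * N / L) ^ j)) := by ring
    _ ≤ (j+1)^2 * (j.factorial ^ 2 * (R * (2 * c * p) * N * (2 * c * p * N / L) ^ j)) := by
        gcongr
        nlinarith
    _ = _ := by
        rw [hf1, pow_succ (2 * c * p * N / L)]; field_simp

variable {X : Type*} [MeasurableSpace X] {Ω : Type*} [MeasurableSpace Ω]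
  {Q : ProbabilityTheory.Kernel X X} [ProbabilityTheory.IsMarkovKernel Q]
  {piQ : Measure X} [IsProbabilityMeasure piQ] {V : X → ℝ} {c ρ : ℝ}
  {P : Measure Ω} [IsProbabilityMeasure P] {Xs : ℕ → Ω → X} {gb : X → ℝ} {N : ℝ} {k : ℕ}

theorem Setup.kappa_bound (S : Setup Q piQ V c ρ P Xs gb N k) (hk : 2 ≤ k) (n : ℕ) :
    |Tsum n k (cml (mom gb Xs P))| / k.factorial ≤
      (k.factorial : ℝ) ^ 2 * ((n * (1 / ρ ^ ((1:ℝ)/2)) * Real.log (1/ρ)) *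
        (2 * c * (∫ x, V x ∂piQ) * N / Real.log (1/ρ)) ^ k) := by
  have hpi0 : 0 ≤ ∫ x, V x ∂piQ := integral_nonneg fun x => by
    have := S.hV1 x
    show (0:ℝ) ≤ V x
    linarith
  have hc := S.hc
  have hρ := S.hρ0
  have hN0 := S.hN0
  have hk0 : (0:ℝ) < k := by have := S.hk; positivity
  have hL0 : 0 < Real.log (1/ρ) := Real.log_pos (by rw [lt_div_iff₀ hρ]; linarith [S.hρ1])
  have hθ1 : ρ ^ ((1:ℝ)/k) < 1 := Real.rpow_lt_one hρ.le S.hρ1 (by positivity)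
  have h := Tsum_geom_top (ρ ^ ((1:ℝ)/k)) (by positivity) hθ1 (k-1) n
    (N * (N * (2 * (c * (∫ x, V x ∂piQ) / Real.exp 1))) ^ (k - 1)
      * (∫ x, V x ∂piQ) * (k-1).factorial) (by positivity) (cml (mom gb Xs P))
    (fun a s hs hsa => S.cml_bound a s (by omega) hsa)
  rw [show k - 1 + 1 = k by omega] at h
  rw [div_le_iff₀ (by positivity)]
  refine h.trans ?_
  have g := geom_log_bound ρ hρ S.hρ1 k S.hk
  have sb := scalar_bound c (∫ x, V x ∂piQ) N (Real.log (1/ρ)) (1 / ρ ^ ((1:ℝ)/2)) hc hpi0 hN0 hL0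
    (by positivity) k hk
  have : (N * (N * (2 * (c * (∫ x, V x ∂piQ) / Real.exp 1))) ^ (k - 1)
      * (∫ x, V x ∂piQ) * (k-1).factorial) * (1 / (1 - ρ ^ ((1:ℝ)/k))) ^ (k - 1) ≤ _ :=
    (mul_le_mul_of_nonneg_left g (by positivity)).trans sb
  calc _ ≤ _ := mul_le_mul_of_nonneg_left (mul_le_mul_of_nonneg_left this (Nat.cast_nonneg _)) (Nat.cast_nonneg _)
    _ = _ := by ring

theorem Tsum_integral (n k : ℕ) (f : Multiset ℕ → Ω → ℝ)
    (hf : ∀ s, Multiset.card s = k → Integrable (f s) P) :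
    Integrable (fun ω => Tsum n k (fun s => f s ω)) P ∧
      Tsum n k (fun s => ∫ ω, f s ω ∂P) = ∫ ω, Tsum n k (fun s => f s ω) ∂P := by
  induction k generalizing f with
  | zero => exact ⟨hf 0 (by simp), rfl⟩
  | succ k ih =>
    have h : ∀ a, _ := fun a => ih (fun s => f (a ::ₘ s)) (fun s hs => hf _ (by simp [hs]))
    simp only [Tsum_succ]
    refine ⟨integrable_finsetSum _ fun a _ => (h a).1, ?_⟩
    refine Eq.trans ?_ (integral_finsetSum _ fun a _ => (h a).1).symm
    exact Finset.sum_congr rfl fun a _ => (h a).2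

theorem Setup.Tsum_mom (S : Setup Q piQ V c ρ P Xs gb N k) (n j : ℕ) (hj : j ≤ k) :
    Tsum n j (mom gb Xs P) = ∫ ω, (∑ i ∈ Finset.range n, gb (Xs i ω)) ^ j ∂P := by
  have h := (Tsum_integral (P := P) n j (fun s ω => prd gb Xs s ω)
    (fun s hs => S.integrable_mom s (by omega))).2
  have e : Tsum n j (mom gb Xs P) = Tsum n j (fun s => ∫ ω, prd gb Xs s ω ∂P) := rfl
  rw [e, h]
  congr 1; funext ω
  have := Tsum_prod n j (fun i => gb (Xs i ω)) 1
  simp only [one_mul] at this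
  exact this

theorem Setup.main (q : ℕ) (hq : 1 ≤ q) (S : Setup Q piQ V c ρ P Xs gb N (2 * q)) (n : ℕ) :
    (∫ ω, (∑ ℓ ∈ Finset.range n, gb (Xs ℓ ω)) ^ (2 * q) ∂P) ≤
      gaussMoment q * (∫ ω, (∑ ℓ ∈ Finset.range n, gb (Xs ℓ ω)) ^ 2 ∂P) ^ q
      + (2 * c * ∫ x, V x ∂piQ) ^ (2 * q) * N ^ (2 * q) *
          ∑ u ∈ Finset.Icc 1 (q - 1),
            Bcoef 0 u q * (n : ℝ) ^ u /
              (ρ ^ ((u : ℝ) / 2) * Real.log (1 / ρ) ^ (2 * q - u)) := by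
  have hc := S.hc
  have hρ := S.hρ0
  have hN0 := S.hN0
  have hpi0 : 0 ≤ ∫ x, V x ∂piQ := integral_nonneg fun x => by
    have := S.hV1 x
    show (0:ℝ) ≤ V x
    linarith
  have hL0 : 0 < Real.log (1/ρ) := Real.log_pos (by rw [lt_div_iff₀ hρ]; linarith [S.hρ1])
  have hS : ∀ j : ℕ, 2 ≤ j → j ≤ 2 * q → Setup Q piQ V c ρ P Xs gb N j := by
    intro j hj2 hj
    refine { S with hk := by omega, hN := fun x => (S.hN x).trans ?_ }
    have : V x ^ ((1:ℝ) / (2 * q : ℕ)) ≤ V x ^ ((1:ℝ) / j) := by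
      apply Real.rpow_le_rpow_of_exponent_le (S.hV1 x)
      have : (0:ℝ) < j := by positivity
      gcongr
    gcongr
  set m := mom gb Xs P with hm
  have hm0 : m 0 = 1 := mom_zero
  have hrec := Tsum_moment n m hm0
  have hM0 : Tsum n 0 m = 1 := hm0
  have hM1 : Tsum n 1 m = 0 := by
    rw [Tsum_succ]
    apply Finset.sum_eq_zero
    intro a _
    show shf a (mom gb Xs P) 0 = 0
    rw [shf_mom, mtm, ← S.hpi0, ← law_eq S.hch S.hinv a,
      integral_map (S.hch.meas a).aemeasurable S.hg.aestronglyMeasurable]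
    simp [prd]
  have hκ1 : Tsum n 1 (cml m) = 0 := by
    have := hrec 0
    simpa [hM0, hM1] using this.symm
  have hκ2 : Tsum n 2 (cml m) = Tsum n 2 m := by
    have := hrec 1
    rw [Finset.Nat.antidiagonal_succ] at this
    simp [hM0, hM1] at this
    exact this.symm
  have hmb := moment_bound (fun j => Tsum n j m) (fun j => Tsum n j (cml m)) hM0 hκ1 hrec q hq
  simp only [hκ2] at hmb
  rw [S.Tsum_mom n (2*q) le_rfl, S.Tsum_mom n 2 (by omega)] at hmb
  refine hmb.trans ?_
  rw [Finset.mul_sum]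
  refine add_le_add le_rfl (Finset.sum_le_sum fun u hu => ?_)
  obtain ⟨hu1, hu2⟩ := Finset.mem_Icc.1 hu
  set L := Real.log (1/ρ) with hL
  set C := 2 * c * ∫ x, V x ∂piQ with hC
  set R := 1 / ρ ^ ((1:ℝ)/2) with hR
  have hR0 : 0 ≤ R := by positivity
  have hprod : ∀ kk ∈ Finset.univ.filter
        (fun k : Fin u → Fin (2 * q + 1) =>
          (∀ i, 2 ≤ (k i : ℕ)) ∧ ∑ i, (k i : ℕ) = 2 * q),
      ∏ i, (|Tsum n (kk i) (cml m)| / ((kk i : ℕ).factorial : ℝ)) ≤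
        (∏ i, ((kk i : ℕ).factorial : ℝ) ^ ((0:ℝ) + 2)) * ((n * R * L) ^ u * (C * N / L) ^ (2 * q)) := by
    intro kk hkk
    obtain ⟨hk2, hks⟩ := (Finset.mem_filter.1 hkk).2
    calc ∏ i, (|Tsum n (kk i) (cml m)| / ((kk i : ℕ).factorial : ℝ))
        ≤ ∏ i, (((kk i : ℕ).factorial : ℝ) ^ ((0:ℝ)+2) * ((n * R * L) * (C * N / L) ^ (kk i : ℕ))) := by
          apply Finset.prod_le_prod
          · intro i _; positivity
          · intro i _
            have := (hS (kk i) (hk2 i) (by have := (kk i).2; omega)).kappa_bound (hk2 i) n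
            rw [zero_add, Real.rpow_two]
            exact this
      _ = _ := by
          rw [Finset.prod_mul_distrib, Finset.prod_mul_distrib, Finset.prod_pow_eq_pow_sum, hks]
          simp
  have e : (n * R * L) ^ u * (C * N / L) ^ (2 * q)
      = C ^ (2*q) * N ^ (2*q) * ((n:ℝ) ^ u / (ρ ^ ((u:ℝ)/2) * L ^ (2*q-u))) := by
    have e1 : ρ ^ ((u:ℝ)/2) = (ρ ^ ((1:ℝ)/2)) ^ u := by
      rw [← Real.rpow_natCast, ← Real.rpow_mul hρ.le]; congr 1; ring
    have e2 : L ^ (2*q) = L ^ (2*q-u) * L ^ u := by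
      rw [← pow_add]; congr 1; omega
    rw [e1, hR, div_pow, mul_pow, mul_pow, mul_pow, div_pow, e2, one_pow]
    field_simp
  calc _ ≤ ((2 * q).factorial : ℝ) / (u.factorial : ℝ) * ∑ k ∈ Finset.univ.filter
        (fun k : Fin u → Fin (2 * q + 1) =>
          (∀ i, 2 ≤ (k i : ℕ)) ∧ ∑ i, (k i : ℕ) = 2 * q),
        (∏ i, ((k i : ℕ).factorial : ℝ) ^ ((0:ℝ) + 2)) * ((n * R * L) ^ u * (C * N / L) ^ (2 * q)) := by
        gcongr with kk hkk
        exact hprod kk hkk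
    _ = Bcoef 0 u q * ((n * R * L) ^ u * (C * N / L) ^ (2 * q)) := by
        rw [← Finset.sum_mul, Bcoef]; ring
    _ = _ := by rw [e]; ring

end assembly

/-- Theorem 1 (Rosenthal-type inequality, stationary chain, `L_{V^{1/(2q)}}` class). -/
theorem rosenthal_V_q
    {X : Type*} [MeasurableSpace X]
    (Q : ProbabilityTheory.Kernel X X) [ProbabilityTheory.IsMarkovKernel Q]
    (V : X → ℝ) (lam b : ℝ) (m : ℕ) (eps d c ρ : ℝ) (piQ : Measure X)
    [IsProbabilityMeasure piQ]
    -- Assumption A1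
    (hV : Measurable V) (hVe : ∀ x, Real.exp 1 ≤ V x)
    (hlam0 : 0 < lam) (hlam1 : lam < 1) (hb : 0 ≤ b)
    (hdrift : ∀ x, ∫ y, V y ∂(Q x) ≤ lam * V x + b)
    -- Assumption A2
    (hm : 1 ≤ m) (heps0 : 0 < eps) (heps1 : eps < 1) (hd : 0 ≤ d)
    (hsmallcond : lam + 2 * b / (1 + d) < 1)
    (hsmall : ∃ ν : Measure X, IsProbabilityMeasure ν ∧
      ∀ x, V x ≤ d → ∀ A : Set X, MeasurableSet A →
        ENNReal.ofReal eps * ν A ≤ (kIter Q m) x A)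
    -- piQ is the unique invariant probability measure, with piQ(V) < ∞
    (hinv : piQ.bind (fun x => Q x) = piQ)
    (huniq : ∀ π' : Measure X, IsProbabilityMeasure π' →
      π'.bind (fun x => Q x) = π' → π' = piQ)
    (hpiV : Integrable V piQ)
    -- geometric ergodicity constants c ≥ 1, ρ ∈ (0,1)
    (hc : 1 ≤ c) (hρ0 : 0 < ρ) (hρ1 : ρ < 1)
    (herg : ∀ ξ : Measure X, IsProbabilityMeasure ξ → Integrable V ξ → ∀ k : ℕ,
      wTV V (ξ.bind (fun x => (kIter Q k) x)) piQ ≤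
        c * ((∫ x, V x ∂ξ) + ∫ x, V x ∂piQ) * ρ ^ k)
    -- the function g and the exponent q
    (q : ℕ) (hq : 1 ≤ q)
    (g : X → ℝ) (hg : MemL (fun x => V x ^ ((1 : ℝ) / (2 * q))) g)
    (n : ℕ) (hn : 1 ≤ n)
    -- the stationary canonical chain
    {Ω : Type*} [MeasurableSpace Ω] (P : Measure Ω) [IsProbabilityMeasure P]
    (Xs : ℕ → Ω → X) (hchain : IsMarkovChain P Xs piQ Q) :
    (∫ ω, |∑ ℓ ∈ Finset.range n, (g (Xs ℓ ω) - ∫ x, g x ∂piQ)| ^ (2 * q) ∂P) ≤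
      gaussMoment q *
        (∫ ω, (∑ ℓ ∈ Finset.range n, (g (Xs ℓ ω) - ∫ x, g x ∂piQ)) ^ 2 ∂P) ^ q
      + (2 * c * ∫ x, V x ∂piQ) ^ (2 * q) *
          vnorm (fun x => V x ^ ((1 : ℝ) / (2 * q)))
            (fun x => g x - ∫ y, g y ∂piQ) ^ (2 * q) *
          ∑ u ∈ Finset.Icc 1 (q - 1),
            Bcoef 0 u q * (n : ℝ) ^ u /
              (ρ ^ ((u : ℝ) / 2) * Real.log (1 / ρ) ^ (2 * q - u)) := by
  have hV1 : ∀ x, 1 ≤ V x := fun x => by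
    have := Real.add_one_le_exp (1:ℝ); linarith [hVe x]
  have hq0 : (0:ℝ) < q := by exact_mod_cast hq
  set U : X → ℝ := fun x => V x ^ ((1 : ℝ) / (2 * q)) with hU
  have hU1 : ∀ x, 1 ≤ U x := fun x => Real.one_le_rpow (hV1 x) (by positivity)
  have hbd : BddAbove (Set.range fun x => |g x - ∫ y, g y ∂piQ| / U x) := by
    obtain ⟨A, hA⟩ := hg.bdd
    refine ⟨A + |∫ y, g y ∂piQ|, ?_⟩
    rintro _ ⟨x, rfl⟩
    have h1 : |g x| / U x ≤ A := hA ⟨x, rfl⟩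
    have hUx : 0 < U x := by linarith [hU1 x]
    show |g x - ∫ y, g y ∂piQ| / U x ≤ _
    rw [div_le_iff₀ hUx] at h1 ⊢
    have h2 := abs_sub (g x) (∫ y, g y ∂piQ)
    have h3 : |∫ y, g y ∂piQ| ≤ |∫ y, g y ∂piQ| * U x := le_mul_of_one_le_right (abs_nonneg _) (hU1 x)
    linarith
  have hgint : Integrable g piQ := by
    obtain ⟨A, hA⟩ := hg.bdd
    have ha1 : (1 : ℝ) / (2 * q) ≤ 1 := by
      have : (1:ℝ) ≤ q := by exact_mod_cast hq
      rw [div_le_one (by positivity)]; linarith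
    refine (abs_int_le (H := A) hV hV1 hpiV (a := (1 : ℝ) / (2 * q)) (by positivity) ha1 hg.meas ?_).1
    intro x
    have h1 : |g x| / U x ≤ A := hA ⟨x, rfl⟩
    have hUx : 0 < U x := by linarith [hU1 x]
    rwa [div_le_iff₀ hUx] at h1
  have hN0 : 0 ≤ vnorm U (fun x => g x - ∫ y, g y ∂piQ) := by
    apply Real.iSup_nonneg
    intro x
    have hUx : 0 < U x := by linarith [hU1 x]
    positivity
  have S : Setup Q piQ V c ρ P Xs (fun x => g x - ∫ y, g y ∂piQ)
      (vnorm U (fun x => g x - ∫ y, g y ∂piQ)) (2 * q) :=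
    { hV := hV
      hVe := hVe
      hinv := hinv
      hpiV := hpiV
      hc := hc
      hρ0 := hρ0
      hρ1 := hρ1
      herg := herg
      hch := hchain
      hg := hg.meas.sub measurable_const
      hN0 := hN0
      hN := fun x => by
        have hUx : 0 < U x := by linarith [hU1 x]
        have h1 : |g x - ∫ y, g y ∂piQ| / U x ≤ vnorm U (fun x => g x - ∫ y, g y ∂piQ) :=
          le_ciSup hbd x
        rw [div_le_iff₀ hUx] at h1
        push_cast
        exact h1
      hk := by omega
      hpi0 := by
        rw [integral_sub hgint (integrable_const _)]
        simp }
  have h := Setup.main q hq S n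
  have e : ∀ ω, |∑ ℓ ∈ Finset.range n, (g (Xs ℓ ω) - ∫ x, g x ∂piQ)| ^ (2 * q)
      = (∑ ℓ ∈ Finset.range n, (g (Xs ℓ ω) - ∫ x, g x ∂piQ)) ^ (2 * q) := by
    intro ω
    exact (even_two_mul q).pow_abs _
  simp only [e]
  exact h
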